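/- arXiv:0810.0183 — 5 statements merged into one kernel-verified Lean document; each statement's English description precedes it below -/
import Mathlib

section
/- Let (f₁,g₁) and (f₂,g₂) be invertible pairs in the real disc algebra A_ℝ(D). Then (f₁,g₁) and (f₂,g₂) are simultaneously stabilizable (i.e., there exist α, β ∈ A_ℝ(D) such that αf₁ + βg₁ and αf₂ + βg₂ are both units of A_ℝ(D)) if and only if the two pairs are sign-linked. -/
open Complex Metric ComplexConjugate

/-- The real disc algebra `A_ℝ(D)`: functions continuous on the closed unit disc,
holomorphic on the open unit disc, satisfying `f z = conj (f (conj z))` on the closed disc. -/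
def IsRDisc (f : ℂ → ℂ) : Prop :=
  ContinuousOn f (closedBall (0 : ℂ) 1) ∧
  DifferentiableOn ℂ f (ball (0 : ℂ) 1) ∧
  ∀ z ∈ closedBall (0 : ℂ) 1, f z = conj (f (conj z))

/-- A unit of `A_ℝ(D)`: a member of the algebra with no zeros on the closed unit disc. -/
def IsRDiscUnit (f : ℂ → ℂ) : Prop :=
  IsRDisc f ∧ ∀ z ∈ closedBall (0 : ℂ) 1, f z ≠ 0

/-- The pair `(f, g)` is invertible in `A_ℝ(D)`: there are `α, β` in the algebra with
`α f + β g = 1` on the closed unit disc. -/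
def BezoutPair (f g : ℂ → ℂ) : Prop :=
  ∃ α β : ℂ → ℂ, IsRDisc α ∧ IsRDisc β ∧
    ∀ z ∈ closedBall (0 : ℂ) 1, α z * f z + β z * g z = 1

/-- The pairs `(f₁,g₁)` and `(f₂,g₂)` are sign-linked. -/
def SignLinked (f₁ g₁ f₂ g₂ : ℂ → ℂ) : Prop :=
  ∀ x y : ℝ, x ∈ Set.Icc (-1 : ℝ) 1 → y ∈ Set.Icc (-1 : ℝ) 1 →
    f₁ (x : ℂ) * g₂ (x : ℂ) - f₂ (x : ℂ) * g₁ (x : ℂ) = 0 →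
    f₁ (y : ℂ) * g₂ (y : ℂ) - f₂ (y : ℂ) * g₁ (y : ℂ) = 0 →
    ∀ lam mu : ℝ,
      f₂ (x : ℂ) = (lam : ℂ) * f₁ (x : ℂ) → g₂ (x : ℂ) = (lam : ℂ) * g₁ (x : ℂ) →
      f₂ (y : ℂ) = (mu : ℂ) * f₁ (y : ℂ) → g₂ (y : ℂ) = (mu : ℂ) * g₁ (y : ℂ) →
      0 < lam * mu

/-- `f` has constant sign on the real zeros of `g`: the (real) values `f x` over
`x ∈ [-1,1]` with `g x = 0` are either all positive or all negative. -/
def ConstSignOnRealZeros (f g : ℂ → ℂ) : Prop :=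
  (∀ x ∈ Set.Icc (-1 : ℝ) 1, g (x : ℂ) = 0 → 0 < (f (x : ℂ)).re) ∨
  (∀ x ∈ Set.Icc (-1 : ℝ) 1, g (x : ℂ) = 0 → (f (x : ℂ)).re < 0)


/-- Membership in the complex disc algebra. -/
def CD (f : ℂ → ℂ) : Prop :=
  ContinuousOn f (closedBall (0 : ℂ) 1) ∧ DifferentiableOn ℂ f (ball (0 : ℂ) 1)

namespace CD
variable {f g : ℂ → ℂ}

lemma add (hf : CD f) (hg : CD g) : CD (fun z => f z + g z) :=
  ⟨hf.1.add hg.1, hf.2.add hg.2⟩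
lemma sub (hf : CD f) (hg : CD g) : CD (fun z => f z - g z) :=
  ⟨hf.1.sub hg.1, hf.2.sub hg.2⟩
lemma mul (hf : CD f) (hg : CD g) : CD (fun z => f z * g z) :=
  ⟨hf.1.mul hg.1, hf.2.mul hg.2⟩
lemma neg (hf : CD f) : CD (fun z => - f z) :=
  ⟨hf.1.neg, hf.2.neg⟩
lemma inv (hf : CD f) (h : ∀ z ∈ closedBall (0 : ℂ) 1, f z ≠ 0) : CD (fun z => (f z)⁻¹) :=
  ⟨hf.1.inv₀ h, hf.2.fun_inv fun z hz => h z (ball_subset_closedBall hz)⟩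
lemma const (c : ℂ) : CD (fun _ => c) := ⟨continuousOn_const, differentiableOn_const c⟩
lemma of_diff (hf : Differentiable ℂ f) : CD f := ⟨hf.continuous.continuousOn, hf.differentiableOn⟩
lemma id' : CD (fun z => z) := of_diff differentiable_id
lemma poly (p : Polynomial ℂ) : CD (fun z => p.eval z) := of_diff p.differentiable
lemma dcl (hf : CD f) : DiffContOnCl ℂ f (ball (0 : ℂ) 1) :=
  DiffContOnCl.mk_ball hf.2 hf.1
lemma bdd (hf : CD f) : ∃ C : ℝ, 0 < C ∧ ∀ z ∈ closedBall (0 : ℂ) 1, ‖f z‖ ≤ C := by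
  obtain ⟨C, hC⟩ := (isCompact_closedBall (0 : ℂ) 1).exists_bound_of_continuousOn hf.1
  exact ⟨max C 1, by positivity, fun z hz => (hC z hz).trans (le_max_left _ _)⟩
lemma star (hf : CD f) : CD (fun z => conj (f (conj z))) := by
  refine ⟨?_, ?_⟩
  · refine Complex.continuous_conj.comp_continuousOn (hf.1.comp Complex.continuous_conj.continuousOn ?_)
    intro z hz
    simpa using hz
  · intro z hz
    have hz' : conj z ∈ ball (0 : ℂ) 1 := by simpa using hz
    have h1 : DifferentiableAt ℂ f (conj z) := (hf.2 _ hz').differentiableAt (isOpen_ball.mem_nhds hz')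
    exact (differentiableAt_conj_conj_iff.2 h1).differentiableWithinAt
end CD

lemma CD.approx {f : ℂ → ℂ} (hf : CD f) {ε : ℝ} (hε : 0 < ε) :
    ∃ p : Polynomial ℂ, ∀ z ∈ closedBall (0 : ℂ) 1, ‖f z - p.eval z‖ < ε := by
  have hu := (isCompact_closedBall (0 : ℂ) 1).uniformContinuousOn_of_continuous hf.1
  rw [Metric.uniformContinuousOn_iff] at hu
  obtain ⟨δ, hδ, hu⟩ := hu (ε / 2) (by positivity)
  obtain ⟨r, hr0, hr1, hrδ⟩ : ∃ r : ℝ, 0 < r ∧ r < 1 ∧ 1 - r < δ := by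
    refine ⟨max (1 / 2) (1 - δ / 2), by positivity, max_lt (by norm_num) (by linarith), ?_⟩
    have := le_max_right (1 / 2) (1 - δ / 2)
    linarith
  have hps := DiffContOnCl.hasFPowerSeriesOnBall (R := 1) (c := 0) (f := f) (by simpa using hf.dcl) one_pos
  set P := cauchyPowerSeries f 0 ((1 : NNReal) : ℝ) with hP
  obtain ⟨r', hr', hr'1⟩ := exists_between hr1
  have hr'0 : 0 ≤ r' := by linarith
  lift r' to NNReal using hr'0
  have ht := hps.tendstoUniformlyOn (r' := r') (by
    rw [ENNReal.coe_lt_coe]; exact_mod_cast hr'1)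
  rw [Metric.tendstoUniformlyOn_iff] at ht
  obtain ⟨n, hn⟩ := (ht (ε / 2) (by positivity)).exists
  let p : Polynomial ℂ := ∑ k ∈ Finset.range n, Polynomial.C (P.coeff k * (r : ℂ) ^ k) * Polynomial.X ^ k
  refine ⟨p, fun z hz => ?_⟩
  have hz1 : ‖z‖ ≤ 1 := by simpa using hz
  have hrz : ‖(r : ℂ) * z‖ ≤ r := by
    rw [norm_mul, Complex.norm_real, Real.norm_of_nonneg hr0.le]
    nlinarith
  have h1 := hn ((r : ℂ) * z) (by simp only [mem_ball, dist_zero_right]; exact lt_of_le_of_lt hrz hr')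
  have h2 := hu z hz ((r : ℂ) * z) (by simp only [mem_closedBall, dist_zero_right]; linarith) (by
    rw [dist_eq_norm, show z - (r : ℂ) * z = ((1 - r : ℝ) : ℂ) * z by push_cast; ring, norm_mul,
      Complex.norm_real, Real.norm_of_nonneg (by linarith)]
    nlinarith)
  have h3 : p.eval z = P.partialSum n ((r : ℂ) * z) := by
    simp only [p, Polynomial.eval_finsetSum, FormalMultilinearSeries.partialSum]
    refine Finset.sum_congr rfl fun k _ => ?_
    rw [FormalMultilinearSeries.apply_eq_pow_smul_coeff]
    simp [mul_pow]
    ring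
  rw [h3, ← dist_eq_norm]
  rw [zero_add] at h1
  linarith [dist_triangle (f z) (f ((r : ℂ) * z)) (P.partialSum n ((r : ℂ) * z))]

/-- real part of a complex polynomial -/
lemma poly_re (p : Polynomial ℂ) : ∃ q : Polynomial ℝ, ∀ z : ℂ,
    Polynomial.aeval z q = (p.eval z + conj (p.eval (conj z))) / 2 := by
  induction p using Polynomial.induction_on' with
  | add p q hp hq =>
    obtain ⟨p', hp⟩ := hp
    obtain ⟨q', hq⟩ := hq
    refine ⟨p' + q', fun z => ?_⟩
    simp [hp, hq]; ring
  | monomial n a =>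
    refine ⟨Polynomial.monomial n a.re, fun z => ?_⟩
    simp only [Polynomial.aeval_monomial, Polynomial.eval_monomial, map_mul, map_pow, Complex.conj_conj]
    rw [← add_mul, Complex.add_conj]
    simp
    ring

lemma IsRDisc.cd {f : ℂ → ℂ} (h : IsRDisc f) : CD f := ⟨h.1, h.2.1⟩

lemma IsRDisc.approx {f : ℂ → ℂ} (hf : IsRDisc f) {ε : ℝ} (hε : 0 < ε) :
    ∃ p : Polynomial ℝ, ∀ z ∈ closedBall (0 : ℂ) 1, ‖f z - Polynomial.aeval z p‖ < ε := by
  obtain ⟨p, hp⟩ := hf.cd.approx hε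
  obtain ⟨q, hq⟩ := poly_re p
  refine ⟨q, fun z hz => ?_⟩
  have hz' : conj z ∈ closedBall (0 : ℂ) 1 := by simpa using hz
  have h1 := hp z hz
  have h2 := hp _ hz'
  rw [← Complex.norm_conj, map_sub, ← hf.2.2 z hz] at h2
  rw [hq, show f z - (p.eval z + conj (p.eval (conj z))) / 2 =
    ((f z - p.eval z) + (f z - conj (p.eval (conj z)))) / 2 by ring, norm_div]
  have := norm_add_le (f z - p.eval z) (f z - conj (p.eval (conj z)))
  simp only [Complex.norm_ofNat]
  linarith

lemma preconn {g : ℂ → ℂ} (hg : CD g) (h0 : ∃ z ∈ ball (0 : ℂ) 1, g z ≠ 0) :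
    IsPreconnected (ball (0 : ℂ) 1 ∩ {z | g z ≠ 0}) := by
  have han : AnalyticOnNhd ℂ g (ball 0 1) := hg.2.analyticOnNhd isOpen_ball
  have hcd := (han.eqOn_zero_or_eventually_ne_zero_of_preconnected
    (convex_ball (0 : ℂ) 1).isPreconnected).resolve_left (by
      obtain ⟨z, hz, hz0⟩ := h0
      exact fun h => hz0 (h hz))
  have hc : ({z | g z = 0} ∩ ball (0 : ℂ) 1).Countable := by
    have hd : IsDiscrete ({z | g z = 0} ∩ ball (0 : ℂ) 1) := isDiscrete_of_codiscreteWithin hcd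
    exact (HereditarilyLindelofSpace.isLindelof _).countable_of_isDiscrete hd
  let φ : ℂ → ℂ := fun z => (Homeomorph.unitBall z : ℂ)
  have hφ : Continuous φ := continuous_subtype_val.comp Homeomorph.unitBall.continuous
  have hi : Function.Injective φ := Subtype.val_injective.comp Homeomorph.unitBall.injective
  have hc' := hc.preimage_of_injOn (f := φ) hi.injOn
  have hconn := (hc'.isConnected_compl_of_one_lt_rank (by
    rw [Complex.rank_real_complex]; norm_num)).isPreconnected
  convert hconn.image φ hφ.continuousOn using 1
  ext z
  constructor
  · rintro ⟨hz, hgz⟩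
    refine ⟨Homeomorph.unitBall.symm ⟨z, hz⟩, ?_, by simp [φ]⟩
    intro h
    apply hgz
    simpa [φ] using h.1
  · rintro ⟨w, hw, rfl⟩
    have : φ w ∈ ball (0 : ℂ) 1 := (Homeomorph.unitBall w).2
    exact ⟨this, fun h => hw ⟨h, this⟩⟩

def Red (g f : ℂ → ℂ) : Prop :=
  ∃ h : ℂ → ℂ, CD h ∧ ∀ z ∈ closedBall (0 : ℂ) 1, f z + h z * g z ≠ 0

lemma Red.congr_unit {g f f' u k : ℂ → ℂ} (hu : CD u)
    (hu0 : ∀ z ∈ closedBall (0 : ℂ) 1, u z ≠ 0) (hk : CD k)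
    (h : ∀ z ∈ closedBall (0 : ℂ) 1, f z = f' z * u z + k z * g z) : Red g f ↔ Red g f' := by
  constructor
  · rintro ⟨a, ha, h0⟩
    refine ⟨_, (hk.add ha).mul (hu.inv hu0), fun z hz h1 => h0 z hz ?_⟩
    have h2 := hu0 z hz
    rw [h z hz]
    field_simp at h1
    linear_combination h1
  · rintro ⟨a, ha, h0⟩
    refine ⟨_, (hu.mul ha).sub hk, fun z hz h1 => ?_⟩
    refine mul_ne_zero (hu0 z hz) (h0 z hz) ?_
    rw [h z hz] at h1
    linear_combination h1

lemma bez {g : ℂ → ℂ} (hg : CD g) {c : ℂ} (hc : c ∈ closedBall (0 : ℂ) 1) (h0 : g c ≠ 0) :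
    ∃ s t : ℂ → ℂ, CD s ∧ CD t ∧
      ∀ z ∈ closedBall (0 : ℂ) 1, (z - c) * s z + t z * g z = 1 := by
  have hpos : 0 < ‖g c‖ := norm_pos_iff.2 h0
  obtain ⟨P, hP⟩ := hg.approx (half_pos hpos)
  obtain ⟨Q, hQ⟩ := Polynomial.X_sub_C_dvd_sub_C_eval (p := P) (a := c)
  have hQ' : ∀ z, P.eval z - P.eval c = (z - c) * Q.eval z := fun z => by
    have := congrArg (Polynomial.eval z) hQ
    simpa using this
  have hw : CD (fun z => P.eval c + (g z - P.eval z)) := (CD.const _).add (hg.sub (CD.poly P))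
  have hw0 : ∀ z ∈ closedBall (0 : ℂ) 1, P.eval c + (g z - P.eval z) ≠ 0 := by
    intro z hz h
    have h1 := hP z hz
    have h2 := hP c hc
    have h3 : P.eval c = -(g z - P.eval z) := by linear_combination h
    have h4 : ‖P.eval c‖ = ‖g z - P.eval z‖ := by rw [h3, norm_neg]
    have h5 := norm_sub_norm_le (g c) (P.eval c)
    linarith
  refine ⟨_, _, (CD.poly Q).neg.mul (hw.inv hw0), hw.inv hw0, fun z hz => ?_⟩
  have := hw0 z hz
  field_simp
  linear_combination hQ' z

lemma loc_const {g : ℂ → ℂ} (hg : CD g) {c : ℂ} (hc : c ∈ closedBall (0 : ℂ) 1) (h0 : g c ≠ 0) :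
    ∃ δ : ℝ, 0 < δ ∧ ∀ c', ‖c' - c‖ < δ →
      (Red g (fun z => z - c') ↔ Red g (fun z => z - c)) := by
  obtain ⟨s, t, hs, ht, hst⟩ := bez hg hc h0
  obtain ⟨C, hC, hsC⟩ := hs.bdd
  refine ⟨1 / C, by positivity, fun c' hc' => ?_⟩
  refine Red.congr_unit (u := fun z => 1 + (c - c') * s z) (k := fun z => (c - c') * t z)
    ((CD.const _).add ((CD.const _).mul hs)) ?_ ((CD.const _).mul ht) ?_
  · intro z hz h
    have h1 : (c' - c) * s z = 1 := by linear_combination -h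
    have h2 : ‖c' - c‖ * ‖s z‖ = 1 := by rw [← norm_mul, h1, norm_one]
    have h3 := hsC z hz
    rw [lt_div_iff₀ hC] at hc'
    nlinarith [norm_nonneg (c' - c)]
  · intro z hz
    linear_combination (-(c - c')) * hst z hz

lemma red_outside (g : ℂ → ℂ) {c : ℂ} (hc : 1 < ‖c‖) : Red g (fun z => z - c) := by
  refine ⟨_, CD.const 0, fun z hz h => ?_⟩
  have : z = c := by linear_combination h
  rw [this] at hz
  simp at hz
  linarith

lemma red_bdry {g : ℂ → ℂ} (hg : CD g) {c : ℂ} (hc : ‖c‖ = 1) (h0 : g c ≠ 0) :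
    Red g (fun z => z - c) := by
  obtain ⟨δ, hδ, h⟩ := loc_const hg (by simp [hc]) h0
  refine (h (((1 + δ / 2 : ℝ) : ℂ) * c) ?_).1 (red_outside g ?_)
  · rw [show ((1 + δ / 2 : ℝ) : ℂ) * c - c = ((δ / 2 : ℝ) : ℂ) * c by push_cast; ring, norm_mul, hc,
      Complex.norm_real, Real.norm_of_nonneg (by positivity)]
    linarith
  · rw [norm_mul, hc, Complex.norm_real, Real.norm_of_nonneg (by positivity)]
    linarith

lemma red_linear {g : ℂ → ℂ} (hg : CD g) (hne : ∃ z ∈ ball (0 : ℂ) 1, g z ≠ 0) {c : ℂ}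
    (hc : c ∈ closedBall (0 : ℂ) 1) (h0 : g c ≠ 0) : Red g (fun z => z - c) := by
  have hc1 : ‖c‖ ≤ 1 := by simpa using hc
  rcases hc1.eq_or_lt with h | hlt
  · exact red_bdry hg h h0
  obtain ⟨w, hw, hgw⟩ : ∃ w : ℂ, ‖w‖ = 1 ∧ g w ≠ 0 := by
    by_contra! hcon
    obtain ⟨z, hz, hgz⟩ := hne
    refine hgz ?_
    refine Complex.eqOn_of_eqOn_frontier (f := g) (g := fun _ => 0) isBounded_ball hg.dcl
      diffContOnCl_const ?_ hz
    intro x hx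
    rw [frontier_ball _ one_ne_zero] at hx
    exact hcon x (by simpa using hx)
  have hwc : w ∈ closedBall (0 : ℂ) 1 := by simp [hw]
  obtain ⟨δ, hδ, hloc⟩ := loc_const hg hwc hgw
  have hev : ∀ᶠ x in nhdsWithin w (closedBall 0 1), g x ≠ 0 := (hg.1 w hwc).eventually_ne hgw
  rw [eventually_nhdsWithin_iff, Metric.eventually_nhds_iff] at hev
  obtain ⟨δ', hδ', hev⟩ := hev
  obtain ⟨η, hη, hη1, hη2, hη3⟩ : ∃ η : ℝ, 0 < η ∧ η < 1 ∧ η < δ ∧ η < δ' := by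
    obtain ⟨η, h1, h2⟩ := exists_between (show (0 : ℝ) < min 1 (min δ δ') by positivity)
    simp only [lt_min_iff] at h2
    exact ⟨η, h1, h2.1, h2.2.1, h2.2.2⟩
  have hn : ‖((1 - η : ℝ) : ℂ) * w‖ < 1 := by
    rw [norm_mul, hw, Complex.norm_real, Real.norm_of_nonneg (by linarith)]
    linarith
  have hd : ‖((1 - η : ℝ) : ℂ) * w - w‖ = η := by
    rw [show ((1 - η : ℝ) : ℂ) * w - w = -((η : ℂ) * w) by push_cast; ring, norm_neg, norm_mul, hw,
      Complex.norm_real, Real.norm_of_nonneg hη.le, mul_one]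
  have hgv := hev (y := ((1 - η : ℝ) : ℂ) * w) (by rw [dist_eq_norm, hd]; exact hη3)
    (by simpa using hn.le)
  have hv : Red g (fun z => z - ((1 - η : ℝ) : ℂ) * w) :=
    (hloc _ (by rw [hd]; exact hη2)).2 (red_bdry hg hw hgw)
  refine ((preconn hg hne).induction₂' (fun x y => Red g (fun z => z - x) ↔ Red g (fun z => z - y))
    ?_ (fun x y z _ _ _ h1 h2 => h1.trans h2) (x := ((1 - η : ℝ) : ℂ) * w) (y := c)
    ⟨by simpa using hn, hgv⟩ ⟨by simpa using hlt, h0⟩).1 hv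
  rintro x ⟨hx, hgx⟩
  obtain ⟨ρ, hρ, hl⟩ := loc_const hg (ball_subset_closedBall hx) hgx
  filter_upwards [mem_nhdsWithin_of_mem_nhds (ball_mem_nhds x hρ)] with y hy
  have := hl y (by simpa [dist_eq_norm] using hy)
  exact ⟨this.symm, this⟩

namespace IsRDisc
variable {f g : ℂ → ℂ}

lemma add (hf : IsRDisc f) (hg : IsRDisc g) : IsRDisc (fun z => f z + g z) :=
  ⟨hf.1.add hg.1, hf.2.1.add hg.2.1, fun z hz => by
    rw [map_add, ← hf.2.2 z hz, ← hg.2.2 z hz]⟩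
lemma sub (hf : IsRDisc f) (hg : IsRDisc g) : IsRDisc (fun z => f z - g z) :=
  ⟨hf.1.sub hg.1, hf.2.1.sub hg.2.1, fun z hz => by
    rw [map_sub, ← hf.2.2 z hz, ← hg.2.2 z hz]⟩
lemma mul (hf : IsRDisc f) (hg : IsRDisc g) : IsRDisc (fun z => f z * g z) :=
  ⟨hf.1.mul hg.1, hf.2.1.mul hg.2.1, fun z hz => by
    rw [map_mul, ← hf.2.2 z hz, ← hg.2.2 z hz]⟩
lemma neg (hf : IsRDisc f) : IsRDisc (fun z => - f z) :=
  ⟨hf.1.neg, hf.2.1.neg, fun z hz => by rw [map_neg, ← hf.2.2 z hz]⟩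
lemma inv (hf : IsRDisc f) (h : ∀ z ∈ closedBall (0 : ℂ) 1, f z ≠ 0) :
    IsRDisc (fun z => (f z)⁻¹) :=
  ⟨(hf.cd.inv h).1, (hf.cd.inv h).2, fun z hz => by rw [map_inv₀, ← hf.2.2 z hz]⟩
lemma const (c : ℝ) : IsRDisc (fun _ => (c : ℂ)) :=
  ⟨(CD.const _).1, (CD.const _).2, fun z hz => by simp⟩
lemma poly (p : Polynomial ℝ) : IsRDisc (fun z => Polynomial.aeval z p) :=
  ⟨p.continuous_aeval.continuousOn, (Polynomial.differentiable_aeval p).differentiableOn,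
    fun z hz => by beta_reduce; rw [Polynomial.aeval_conj, Complex.conj_conj]⟩
lemma im_zero (hf : IsRDisc f) {x : ℝ} (hx : x ∈ Set.Icc (-1 : ℝ) 1) : (f x).im = 0 := by
  have := hf.2.2 x (by simpa [abs_le] using hx)
  rw [Complex.conj_ofReal] at this
  exact Complex.conj_eq_iff_im.1 this.symm
lemma contReal (hf : IsRDisc f) : ContinuousOn (fun x : ℝ => (f x).re) (Set.Icc (-1) 1) := by
  refine Complex.continuous_re.comp_continuousOn
    (hf.1.comp Complex.continuous_ofReal.continuousOn ?_)
  intro x hx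
  simpa [abs_le] using hx
end IsRDisc

def RRed (g f : ℂ → ℂ) : Prop :=
  ∃ h : ℂ → ℂ, IsRDisc h ∧ ∀ z ∈ closedBall (0 : ℂ) 1, f z + h z * g z ≠ 0

lemma rred_quad {g : ℂ → ℂ} (hg : IsRDisc g) {c : ℂ} (h : Red g (fun z => z - c)) :
    RRed g (fun z => (z - c) * (z - conj c)) := by
  obtain ⟨h, hh, h0⟩ := h
  have hH := (((CD.id'.sub (CD.const c)).mul hh.star).add ((CD.id'.sub (CD.const (conj c))).mul hh)).add
    ((hh.mul hh.star).mul hg.cd)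
  refine ⟨_, ⟨hH.1, hH.2, ?_⟩, ?_⟩
  · intro z hz
    have := hg.2.2 z hz
    simp only [map_add, map_mul, map_sub, Complex.conj_conj, ← this]
    ring
  · intro z hz h1
    have hz' : conj z ∈ closedBall (0 : ℂ) 1 := by simpa using hz
    have h2 := (map_ne_zero (starRingEnd ℂ)).2 (h0 _ hz')
    rw [map_add, map_mul, ← hg.2.2 z hz, map_sub, Complex.conj_conj] at h2
    refine mul_ne_zero (h0 z hz) h2 ?_
    linear_combination h1

lemma rred_mul {g f f' : ℂ → ℂ} (hg : IsRDisc g) (hf : IsRDisc f) (hf' : IsRDisc f')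
    (h : RRed g f) (h' : RRed g f') : RRed g (fun z => f z * f' z) := by
  obtain ⟨a, ha, h0⟩ := h
  obtain ⟨b, hb, h0'⟩ := h'
  refine ⟨_, ((ha.mul hf').add (hf.mul hb)).add ((ha.mul hb).mul hg), fun z hz h1 => ?_⟩
  refine mul_ne_zero (h0 z hz) (h0' z hz) ?_
  linear_combination h1

lemma rred_poly {g : ℂ → ℂ} (hg : IsRDisc g) (hne : ∃ z ∈ ball (0 : ℂ) 1, g z ≠ 0) (n : ℕ) :
    ∀ p : Polynomial ℝ, p.natDegree < n →
    (∀ z ∈ closedBall (0 : ℂ) 1, Polynomial.aeval z p = 0 → g z ≠ 0 ∧ z.im ≠ 0) →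
    RRed g (fun z => Polynomial.aeval z p) := by
  induction n with
  | zero => intro p hp; omega
  | succ n ih =>
    intro p hp hroot
    by_cases hall : ∀ z ∈ closedBall (0 : ℂ) 1, Polynomial.aeval z p ≠ 0
    · exact ⟨_, IsRDisc.const 0, fun z hz => by simpa using hall z hz⟩
    push Not at hall
    obtain ⟨c, hc, hpc⟩ := hall
    obtain ⟨hgc, him⟩ := hroot c hc hpc
    obtain ⟨p', hp'⟩ := p.quadratic_dvd_of_aeval_eq_zero_im_ne_zero hpc him
    set q : Polynomial ℝ := Polynomial.X ^ 2 - Polynomial.C (2 * c.re) * Polynomial.X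
      + Polynomial.C (‖c‖ ^ 2) with hq
    have hp0 : p ≠ 0 := by
      rintro rfl
      have := hroot 0 (by simp) (by simp)
      simp at this
    have hq2 : q.natDegree = 2 := by rw [hq]; compute_degree!
    have hqe : ∀ z : ℂ, Polynomial.aeval z q = (z - c) * (z - conj c) := by
      intro z
      have h1 := Complex.add_conj c
      have h2 := Complex.mul_conj' c
      simp only [hq, map_add, map_sub, map_mul, map_pow, Polynomial.aeval_X, Polynomial.aeval_C]
      simp only [Complex.coe_algebraMap]
      push_cast at h1 ⊢
      linear_combination z * h1 - h2
    have hq0 : q ≠ 0 := left_ne_zero_of_mul (hp' ▸ hp0)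
    have hp'0 : p' ≠ 0 := right_ne_zero_of_mul (hp' ▸ hp0)
    have hdeg : p.natDegree = 2 + p'.natDegree := by
      rw [hp', Polynomial.natDegree_mul hq0 hp'0, hq2]
    have h1 := ih p' (by omega) (fun z hz hz0 => hroot z hz (by rw [hp', map_mul, hz0, mul_zero]))
    have h2 := rred_quad hg (red_linear hg.cd hne hc hgc)
    have h3 : RRed g (fun z => Polynomial.aeval z q) := by simpa only [hqe] using h2
    have h4 := rred_mul hg (IsRDisc.poly q) (IsRDisc.poly p') h3 h1
    simpa only [hp', map_mul] using h4

lemma exists_M {f g : ℝ → ℝ} (hf : ContinuousOn f (Set.Icc (-1) 1))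
    (hg : ContinuousOn g (Set.Icc (-1) 1)) (h : ∀ x ∈ Set.Icc (-1 : ℝ) 1, g x = 0 → 0 < f x) :
    ∃ M : ℝ, ∀ x ∈ Set.Icc (-1 : ℝ) 1, 0 < f x + M * g x ^ 2 := by
  let K : Set ℝ := Set.Icc (-1) 1 ∩ f ⁻¹' Set.Iic 0
  have hK : IsCompact K := isCompact_Icc.of_isClosed_subset
    (hf.preimage_isClosed_of_isClosed isClosed_Icc isClosed_Iic) Set.inter_subset_left
  rcases K.eq_empty_or_nonempty with he | hn
  · refine ⟨0, fun x hx => ?_⟩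
    by_contra hcon
    have : x ∈ K := ⟨hx, by simp at hcon ⊢; linarith⟩
    rw [he] at this
    exact this
  obtain ⟨x0, hx0, hmin⟩ := hK.exists_isMinOn hn ((hg.pow 2).mono Set.inter_subset_left)
  obtain ⟨C, hC⟩ := isCompact_Icc.exists_bound_of_continuousOn hf
  have hC0 : 0 ≤ C := (norm_nonneg _).trans (hC 0 (by simp))
  have hm : 0 < g x0 ^ 2 := by
    have : g x0 ≠ 0 := fun h0 => absurd (h x0 hx0.1 h0) (not_lt.2 hx0.2)
    positivity
  refine ⟨(C + 1) / g x0 ^ 2, fun x hx => ?_⟩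
  by_cases hxK : f x ≤ 0
  · have h1 : g x0 ^ 2 ≤ g x ^ 2 := hmin (show x ∈ K from ⟨hx, hxK⟩)
    have h2 : C + 1 ≤ (C + 1) / g x0 ^ 2 * g x ^ 2 := by
      rw [div_mul_eq_mul_div, le_div_iff₀ hm]
      nlinarith
    have h3 := hC x hx
    rw [Real.norm_eq_abs, abs_le] at h3
    linarith
  · have : 0 ≤ (C + 1) / g x0 ^ 2 * g x ^ 2 := by positivity
    linarith

lemma core {f g s t : ℂ → ℂ} (hf : IsRDisc f) (hg : IsRDisc g) (hs : IsRDisc s) (ht : IsRDisc t)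
    (hst : ∀ z ∈ closedBall (0 : ℂ) 1, s z * f z + t z * g z = 1)
    (hpos : ∀ x ∈ Set.Icc (-1 : ℝ) 1, g x = 0 → 0 < (f x).re) : RRed g f := by
  by_cases hne : ∃ z ∈ ball (0 : ℂ) 1, g z ≠ 0
  swap
  · push Not at hne
    have h0 : Set.EqOn g (fun _ => 0) (closedBall (0 : ℂ) 1) :=
      Set.EqOn.of_subset_closure (s := ball (0 : ℂ) 1) (fun z hz => hne z hz) hg.1 continuousOn_const
        ball_subset_closedBall (by rw [closure_ball _ one_ne_zero])
    refine ⟨_, IsRDisc.const 0, fun z hz h => ?_⟩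
    have h1 := hst z hz
    have h2 : f z = 0 := by simpa using h
    have h3 : g z = 0 := h0 hz
    rw [h2, h3] at h1
    simp at h1
  obtain ⟨M, hM⟩ := exists_M hf.contReal hg.contReal (fun x hx h => hpos x hx
    (Complex.ext h (hg.im_zero hx)))
  let f1 : ℂ → ℂ := fun z => f z + (M : ℂ) * (g z * g z)
  have hf1 : IsRDisc f1 := hf.add ((IsRDisc.const M).mul (hg.mul hg))
  let t1 : ℂ → ℂ := fun z => t z - s z * ((M : ℂ) * g z)
  have ht1 : IsRDisc t1 := ht.sub (hs.mul ((IsRDisc.const M).mul hg))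
  have hst1 : ∀ z ∈ closedBall (0 : ℂ) 1, s z * f1 z + t1 z * g z = 1 := fun z hz => by
    simp only [f1, t1]
    linear_combination hst z hz
  have hpos1 : ∀ x ∈ Set.Icc (-1 : ℝ) 1, 0 < (f1 x).re := fun x hx => by
    have := hM x hx
    have hi := hg.im_zero hx
    simp only [f1, Complex.add_re, Complex.mul_re, Complex.ofReal_re, Complex.ofReal_im, hi]
    linarith
  suffices h : RRed g f1 by
    obtain ⟨h, hh, h0⟩ := h
    refine ⟨_, hh.add ((IsRDisc.const M).mul hg), fun z hz h1 => h0 z hz ?_⟩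
    simp only [f1]
    linear_combination h1
  obtain ⟨x0, hx0, hmin⟩ := isCompact_Icc.exists_isMinOn (Set.nonempty_Icc.2 (by norm_num)) hf1.contReal
  obtain ⟨C, hC, hsC⟩ := hs.cd.bdd
  obtain ⟨p, hp⟩ := hf1.approx (ε := min (f1 x0).re (1 / C))
    (lt_min (hpos1 x0 hx0) (by positivity))
  let u : ℂ → ℂ := fun z => ((1 : ℝ) : ℂ) - (f1 z - Polynomial.aeval z p) * s z
  have hu : IsRDisc u := (IsRDisc.const 1).sub ((hf1.sub (IsRDisc.poly p)).mul hs)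
  have hu0 : ∀ z ∈ closedBall (0 : ℂ) 1, u z ≠ 0 := by
    intro z hz h
    have h1 : (f1 z - Polynomial.aeval z p) * s z = 1 := by
      simp only [u] at h
      push_cast at h
      linear_combination -h
    have h2 : ‖f1 z - Polynomial.aeval z p‖ * ‖s z‖ = 1 := by rw [← norm_mul, h1, norm_one]
    have h3 := (hp z hz).trans_le (min_le_right _ _)
    rw [lt_div_iff₀ hC] at h3
    nlinarith [hsC z hz, norm_nonneg (f1 z - Polynomial.aeval z p)]
  have hkey : ∀ z ∈ closedBall (0 : ℂ) 1,
      Polynomial.aeval z p = f1 z * u z - (f1 z - Polynomial.aeval z p) * t1 z * g z := by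
    intro z hz
    simp only [u]
    push_cast
    linear_combination (f1 z - Polynomial.aeval z p) * hst1 z hz
  obtain ⟨h, hh, h0⟩ := rred_poly hg hne _ p (Nat.lt_succ_self _) (by
    intro z hz hz0
    constructor
    · intro hgz
      have h1 := hkey z hz
      rw [hz0, hgz, mul_zero, sub_zero] at h1
      have h2 : f1 z = 0 := (mul_eq_zero.1 h1.symm).resolve_right (hu0 z hz)
      have h3 := hst1 z hz
      rw [h2, hgz] at h3
      simp at h3
    · intro him
      obtain ⟨x, rfl⟩ : ∃ x : ℝ, z = x := ⟨z.re, Complex.ext rfl (by simp [him])⟩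
      have hx : x ∈ Set.Icc (-1 : ℝ) 1 := by simpa [abs_le] using hz
      have h1 := (hp x hz).trans_le (min_le_left _ _)
      rw [hz0, sub_zero] at h1
      have h2 : (f1 x0).re ≤ (f1 x).re := hmin hx
      linarith [Complex.re_le_norm (f1 x)])
  refine ⟨_, (hh.sub ((hf1.sub (IsRDisc.poly p)).mul ht1)).mul (hu.inv hu0), fun z hz h1 => h0 z hz ?_⟩
  have h2 := hu0 z hz
  field_simp at h1
  linear_combination h1 + hkey z hz

lemma re_sign {u : ℂ → ℂ} (hu : IsRDiscUnit u) {x y : ℝ} (hx : x ∈ Set.Icc (-1 : ℝ) 1)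
    (hy : y ∈ Set.Icc (-1 : ℝ) 1) : 0 < (u x).re * (u y).re := by
  have hne : ∀ w ∈ Set.Icc (-1 : ℝ) 1, (u w).re ≠ 0 := fun w hw h =>
    hu.2 w (by simpa [abs_le] using hw) (Complex.ext h (hu.1.im_zero hw))
  by_contra hcon
  have hconn : IsPreconnected ((fun x : ℝ => (u x).re) '' Set.Icc (-1) 1) :=
    isPreconnected_Icc.image _ hu.1.contReal
  have hz : (0 : ℝ) ∈ ((fun x : ℝ => (u x).re) '' Set.Icc (-1) 1) := by
    rcases le_total (u x).re 0 with h | h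
    · rcases le_total (u y).re 0 with h' | h'
      · have := mul_pos_of_neg_of_neg (h.lt_of_ne (hne x hx)) (h'.lt_of_ne (hne y hy))
        exact absurd this hcon
      · exact hconn.ordConnected.out ⟨x, hx, rfl⟩ ⟨y, hy, rfl⟩ ⟨h, h'⟩
    · rcases le_total (u y).re 0 with h' | h'
      · exact hconn.ordConnected.out ⟨y, hy, rfl⟩ ⟨x, hx, rfl⟩ ⟨h', h⟩
      · have := mul_pos (h.lt_of_ne' (hne x hx)) (h'.lt_of_ne' (hne y hy))
        exact absurd this hcon
  obtain ⟨w, hw, h0⟩ := hz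
  exact hne w hw h0

theorem simultaneous_stabilization_iff_sign_linked (f₁ g₁ f₂ g₂ : ℂ → ℂ)
    (hf₁ : IsRDisc f₁) (hg₁ : IsRDisc g₁) (hf₂ : IsRDisc f₂) (hg₂ : IsRDisc g₂)
    (hinv₁ : BezoutPair f₁ g₁) (hinv₂ : BezoutPair f₂ g₂) :
    (∃ α β : ℂ → ℂ, IsRDisc α ∧ IsRDisc β ∧
        IsRDiscUnit (fun z => α z * f₁ z + β z * g₁ z) ∧
        IsRDiscUnit (fun z => α z * f₂ z + β z * g₂ z)) ↔
      SignLinked f₁ g₁ f₂ g₂ := by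
  constructor
  · rintro ⟨α, β, hα, hβ, hu1, hu2⟩ x y hx hy - - lam mu h1 h2 h3 h4
    have e1 : (α x * f₂ x + β x * g₂ x).re = lam * (α x * f₁ x + β x * g₁ x).re := by
      rw [h1, h2, ← Complex.re_ofReal_mul]
      congr 1
      ring
    have e2 : (α y * f₂ y + β y * g₂ y).re = mu * (α y * f₁ y + β y * g₁ y).re := by
      rw [h3, h4, ← Complex.re_ofReal_mul]
      congr 1
      ring
    have p1 := re_sign hu1 hx hy
    have p2 := re_sign hu2 hx hy
    rw [e1, e2] at p2
    refine pos_of_mul_pos_left (b := (α x * f₁ x + β x * g₁ x).re * (α y * f₁ y + β y * g₁ y).re)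
      ?_ p1.le
    linarith
  · intro hSL
    obtain ⟨a₁, b₁, ha₁, hb₁, h₁⟩ := hinv₁
    obtain ⟨a₂, b₂, ha₂, hb₂, h₂⟩ := hinv₂
    let F : ℂ → ℂ := fun z => a₁ z * f₂ z + b₁ z * g₂ z
    let Δ : ℂ → ℂ := fun z => f₁ z * g₂ z - f₂ z * g₁ z
    have hF : IsRDisc F := (ha₁.mul hf₂).add (hb₁.mul hg₂)
    have hΔ : IsRDisc Δ := (hf₁.mul hg₂).sub (hf₂.mul hg₁)
    have hs : IsRDisc (fun z => a₂ z * f₁ z + b₂ z * g₁ z) := (ha₂.mul hf₁).add (hb₂.mul hg₁)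
    have ht : IsRDisc (fun z => b₂ z * a₁ z - a₂ z * b₁ z) := (hb₂.mul ha₁).sub (ha₂.mul hb₁)
    have hst : ∀ z ∈ closedBall (0 : ℂ) 1, (a₂ z * f₁ z + b₂ z * g₁ z) * F z +
        (b₂ z * a₁ z - a₂ z * b₁ z) * Δ z = 1 := fun z hz => by
      simp only [F, Δ]
      linear_combination h₂ z hz + (a₂ z * f₂ z + b₂ z * g₂ z) * h₁ z hz
    have hmul : ∀ x ∈ Set.Icc (-1 : ℝ) 1, Δ x = 0 →
        f₂ x = ((F x).re : ℂ) * f₁ x ∧ g₂ x = ((F x).re : ℂ) * g₁ x := by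
      intro x hx h0
      have hx' : (x : ℂ) ∈ closedBall (0 : ℂ) 1 := by simpa [abs_le] using hx
      have e : ((F x).re : ℂ) = F x := Complex.ext rfl (by simp [hF.im_zero hx])
      rw [e]
      simp only [F, Δ] at h0 ⊢
      constructor
      · linear_combination (-f₂ x) * h₁ x hx' - b₁ x * h0
      · linear_combination (-g₂ x) * h₁ x hx' + a₁ x * h0
    have hsign : ∀ x ∈ Set.Icc (-1 : ℝ) 1, ∀ y ∈ Set.Icc (-1 : ℝ) 1, Δ x = 0 → Δ y = 0 →
        0 < (F x).re * (F y).re := fun x hx y hy hx0 hy0 =>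
      hSL x y hx hy hx0 hy0 _ _ (hmul x hx hx0).1 (hmul x hx hx0).2 (hmul y hy hy0).1
        (hmul y hy hy0).2
    have hred : RRed Δ F := by
      by_cases hneg : ∃ x ∈ Set.Icc (-1 : ℝ) 1, Δ x = 0 ∧ (F x).re < 0
      · obtain ⟨x, hx, hx0, hxn⟩ := hneg
        obtain ⟨h, hh, h0⟩ := core (f := fun z => -F z) hF.neg hΔ hs.neg ht
          (fun z hz => by linear_combination hst z hz) (fun y hy hy0 => by
            have := neg_of_mul_pos_right (hsign x hx y hy hx0 hy0) hxn.le
            simpa using this)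
        refine ⟨_, hh.neg, fun z hz h1 => h0 z hz ?_⟩
        linear_combination -h1
      · push Not at hneg
        refine core hF hΔ hs ht hst fun x hx hx0 => ?_
        have h1 := hsign x hx x hx hx0 hx0
        exact (hneg x hx hx0).lt_of_ne fun h => by rw [← h] at h1; simp at h1
    obtain ⟨h, hh, h0⟩ := hred
    have hα := ha₁.sub (hh.mul hg₁)
    have hβ := hb₁.add (hh.mul hf₁)
    refine ⟨_, _, hα, hβ, ⟨(hα.mul hf₁).add (hβ.mul hg₁), fun z hz h1 => ?_⟩,
      ⟨(hα.mul hf₂).add (hβ.mul hg₂), fun z hz h1 => ?_⟩⟩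
    · refine one_ne_zero (α := ℂ) ?_
      linear_combination h1 - h₁ z hz
    · refine h0 z hz ?_
      simp only [F, Δ]
      linear_combination h1
end

section
/- There exists a natural number n such that there is no function h in the real disc algebra A_ℝ(D) for which both z ↦ 1 + h(z)z² and z ↦ n²z² + h(z) are units of A_ℝ(D). -/
open Complex Metric ComplexConjugate

lemma exists_log_ball {f : ℂ → ℂ} {c : ℂ} {r : ℝ} (hf : DifferentiableOn ℂ f (ball c r))
    (h0 : ∀ z ∈ ball c r, f z ≠ 0) :
    ∃ g : ℂ → ℂ, DifferentiableOn ℂ g (ball c r) ∧ ∀ z ∈ ball c r, f z = exp (g z) := by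
  by_cases hr : 0 < r
  swap
  · rw [ball_eq_empty.2 (not_lt.1 hr)]
    exact ⟨0, by simp, by simp⟩
  have hd : DifferentiableOn ℂ (fun z => deriv f z / f z) (ball c r) :=
    (hf.deriv isOpen_ball).div hf h0
  obtain ⟨g, hgc, hg⟩ := hd.isExactOn_ball.with_val_at c (Complex.log (f c))
  refine ⟨g, fun z hz => (hg z hz).differentiableAt.differentiableWithinAt, fun z hz => ?_⟩
  have hcst : ∀ z ∈ ball c r, HasDerivAt (fun z => f z * exp (-g z)) 0 z := by
    intro z hz
    have h1 := (hf.differentiableAt (isOpen_ball.mem_nhds hz)).hasDerivAt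
    have h2 := h1.mul ((hg z hz).neg.cexp)
    refine h2.congr_deriv ?_
    have e : f z * (deriv f z / f z) = deriv f z := mul_div_cancel₀ _ (h0 z hz)
    linear_combination -exp (-g z) * e
  have hk : ‖f z * exp (-g z) - f c * exp (-g c)‖ ≤ 0 * ‖z - c‖ :=
    (convex_ball c r).norm_image_sub_le_of_norm_hasDerivWithin_le
      (f := fun z => f z * exp (-g z)) (f' := fun _ => 0)
      (fun x hx => (hcst x hx).hasDerivWithinAt) (by simp) (mem_ball_self hr) hz
  have h3 : f z * exp (-g z) = f c * exp (-g c) := by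
    simpa [sub_eq_zero] using hk
  have h4 : f c * exp (-g c) = 1 := by
    rw [hgc, exp_neg, exp_log (h0 c (mem_ball_self hr))]
    exact mul_inv_cancel₀ (h0 c (mem_ball_self hr))
  rw [h4, exp_neg] at h3
  have := exp_ne_zero (g z)
  field_simp at h3
  exact h3

/-- Bloch-type estimate -/
lemma bloch_aux {f : ℂ → ℂ} {c : ℂ} {r R : ℝ} {U : Set ℂ} (hU : IsOpen U)
    (hUs : closedBall c r ⊆ U) (hr : 0 < r) (hf : DifferentiableOn ℂ f U)
    (hom : ∀ w : ℂ, ∃ p : ℂ, ‖p - w‖ < R ∧ ∀ z ∈ closedBall c r, f z ≠ p) :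
    ‖deriv f c‖ * r ≤ 64 * R := by
  by_contra hcon
  push Not at hcon
  have hRpos : 0 < R := by
    obtain ⟨p, hp, -⟩ := hom 0
    exact lt_of_le_of_lt (norm_nonneg _) hp
  have hdc : ContinuousOn (deriv f) U := (hf.deriv hU).continuousOn
  obtain ⟨z0, hz0, hmax⟩ := (isCompact_closedBall c r).exists_isMaxOn
    ⟨c, mem_closedBall_self hr.le⟩
    (f := fun z => ‖deriv f z‖ * (r - ‖z - c‖))
    ((hdc.mono hUs).norm.mul (by fun_prop))
  have hmax' : ∀ z ∈ closedBall c r, ‖deriv f z‖ * (r - ‖z - c‖) ≤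
    ‖deriv f z0‖ * (r - ‖z0 - c‖) := fun z hz => hmax hz
  set m := ‖deriv f z0‖ with hm
  set t := (r - ‖z0 - c‖) / 2 with ht
  have hmt : 32 * R < m * t := by
    have := hmax' c (mem_closedBall_self hr.le)
    simp only [sub_self, norm_zero, sub_zero] at this
    rw [ht]; nlinarith
  have hm0 : 0 ≤ m := norm_nonneg _
  have ht0 : 0 < t := by
    by_contra h
    push Not at h
    nlinarith
  have hmpos : 0 < m := by
    rcases hm0.eq_or_lt with h | h
    · rw [← h] at hmt; nlinarith
    · exact h
  have hsub : ball z0 t ⊆ closedBall c r := by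
    intro z hz
    rw [mem_ball, dist_eq_norm] at hz
    rw [mem_closedBall, dist_eq_norm]
    have : ‖z - c‖ ≤ ‖z - z0‖ + ‖z0 - c‖ := norm_sub_le_norm_sub_add_norm_sub _ _ _
    linarith
  have hb2 : ∀ z ∈ ball z0 t, ‖deriv f z‖ ≤ 2 * m := by
    intro z hz
    have h1 := hmax' z (hsub hz)
    rw [mem_ball, dist_eq_norm] at hz
    have : ‖z - c‖ ≤ ‖z - z0‖ + ‖z0 - c‖ := norm_sub_le_norm_sub_add_norm_sub _ _ _
    have h2 : t ≤ r - ‖z - c‖ := by linarith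
    have h3 : ‖deriv f z‖ * t ≤ m * (2 * t) := by
      calc ‖deriv f z‖ * t ≤ ‖deriv f z‖ * (r - ‖z - c‖) := by gcongr
        _ ≤ _ := h1
        _ = _ := by rw [ht]; ring
    nlinarith
  have hsch : ∀ z ∈ ball z0 t, ‖deriv f z - deriv f z0‖ ≤ 3 * m / t * ‖z - z0‖ := by
    intro z hz
    have := dist_le_div_mul_dist_of_mapsTo_ball (f := deriv f) (c := z0) (R₁ := t) (R₂ := 3 * m)
      ((hf.deriv hU).mono (hsub.trans hUs)) (fun y hy => by
        rw [mem_closedBall, dist_eq_norm]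
        have := norm_sub_le (deriv f y) (deriv f z0)
        have := hb2 y hy
        linarith) hz
    simpa [dist_eq_norm] using this
  have h8 : closedBall z0 (t/8) ⊆ ball z0 t := closedBall_subset_ball (by linarith)
  have hdiff : ∀ z ∈ U, DifferentiableAt ℂ f z := fun z hz =>
    hf.differentiableAt (hU.mem_nhds hz)
  have hlin : ∀ z ∈ closedBall z0 (t/8),
      ‖(f z - deriv f z0 * z) - (f z0 - deriv f z0 * z0)‖ ≤ m / 2 * ‖z - z0‖ := by
    intro z hz
    refine (convex_closedBall z0 (t/8)).norm_image_sub_le_of_norm_hasDerivWithin_le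
      (f := fun z => f z - deriv f z0 * z) (f' := fun z => deriv f z - deriv f z0)
      (fun x hx => ?_) (fun x hx => ?_) (mem_closedBall_self (by linarith)) hz
    · have h1 := (hdiff x (hUs (hsub (h8 hx)))).hasDerivAt
      have h2 := h1.sub ((hasDerivAt_id x).const_mul (deriv f z0))
      rw [mul_one] at h2
      exact h2.hasDerivWithinAt
    · refine (hsch x (h8 hx)).trans ?_
      rw [mem_closedBall, dist_eq_norm] at hx
      calc 3 * m / t * ‖x - z0‖ ≤ 3 * m / t * (t / 8) := by gcongr
        _ = 3 * m / 8 := by field_simp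
        _ ≤ m / 2 := by linarith
  have hsph : ∀ z ∈ sphere z0 (t/8), m * t / 16 ≤ ‖f z - f z0‖ := by
    intro z hz
    have h1 := hlin z (sphere_subset_closedBall hz)
    rw [mem_sphere, dist_eq_norm] at hz
    have h2 : deriv f z0 * (z - z0) = (f z - f z0) -
      ((f z - deriv f z0 * z) - (f z0 - deriv f z0 * z0)) := by ring
    have h3 : ‖deriv f z0 * (z - z0)‖ ≤ ‖f z - f z0‖ + m / 2 * ‖z - z0‖ := by
      rw [h2]; exact (norm_sub_le _ _).trans (by gcongr)
    rw [norm_mul, hz, ← hm] at h3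
    linarith
  have hfreq : ∃ᶠ z in nhds z0, f z ≠ f z0 := by
    intro hev
    simp only [ne_eq, not_not] at hev
    have : deriv f z0 = 0 := by
      have h := Filter.EventuallyEq.deriv_eq (f₁ := f) (f := fun _ => f z0) hev
      rw [h]; simp
    rw [hm, this, norm_zero] at hmpos
    exact lt_irrefl _ hmpos
  have himg := DiffContOnCl.ball_subset_image_closedBall (f := f) (z₀ := z0) (r := t/8)
    (ε := m * t / 16)
    (DifferentiableOn.diffContOnCl (by
      rw [closure_ball _ (by linarith)]
      exact hf.mono (h8.trans (hsub.trans hUs)))) (by linarith) hsph hfreq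
  obtain ⟨p, hp, hpn⟩ := hom (f z0)
  obtain ⟨y, hy, hyp⟩ := himg (show p ∈ ball (f z0) (m * t / 16 / 2) by
    rw [mem_ball, dist_eq_norm]; linarith)
  exact hpn y (hsub (h8 hy)) hyp

lemma net_aux (w : ℂ) : ∃ p : ℂ, ‖p - w‖ < 3 ∧ ∃ k : ℤ, cosh p ^ 2 = k := by
  -- nonnegative real case
  have key : ∀ x : ℝ, 0 ≤ x → ∃ x' : ℝ, |x' - x| ≤ 1 ∧ ∃ k : ℤ, Real.cosh (2 * x') = 2 * k - 1 := by
    intro x hx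
    set k : ℤ := ⌈(Real.cosh (2 * x) + 1) / 2⌉ with hk
    have h1 : Real.cosh (2 * x) ≤ 2 * k - 1 := by
      have := Int.le_ceil ((Real.cosh (2 * x) + 1) / 2)
      linarith
    have h2 : 2 * (k:ℝ) - 1 ≤ Real.cosh (2 * (x + 1)) := by
      have h3 := Int.ceil_lt_add_one ((Real.cosh (2 * x) + 1) / 2)
      have h4 : 2 * (k:ℝ) - 1 ≤ Real.cosh (2 * x) + 2 := by linarith
      have h5 : Real.cosh (2 * (x + 1)) = Real.cosh (2*x) * Real.cosh 2 + Real.sinh (2*x) * Real.sinh 2 := by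
        rw [← Real.cosh_add]; ring_nf
      have h6 : 0 ≤ Real.sinh (2*x) := Real.sinh_nonneg_iff.2 (by linarith)
      have h7 : 0 ≤ Real.sinh 2 := Real.sinh_nonneg_iff.2 (by norm_num)
      have h8 : 3 ≤ Real.cosh 2 := by
        rw [show (2:ℝ) = 2 * 1 by norm_num, Real.cosh_two_mul]
        have := Real.one_le_cosh 1
        have h9 : 1 ≤ Real.sinh 1 := Real.self_le_sinh_iff.2 (by norm_num)
        nlinarith [Real.cosh_sq 1]
      have h10 := Real.one_le_cosh (2*x)
      nlinarith [mul_nonneg h6 h7]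
    obtain ⟨x', hx', hx'2⟩ := intermediate_value_Icc (show x ≤ x + 1 by linarith)
      (f := fun x => Real.cosh (2 * x)) (by fun_prop) ⟨h1, h2⟩
    refine ⟨x', ?_, k, hx'2⟩
    rw [abs_le]; constructor <;> linarith [hx'.1, hx'.2]
  have key2 : ∃ x' : ℝ, |x' - w.re| ≤ 1 ∧ ∃ k : ℤ, Real.cosh (2 * x') = 2 * k - 1 := by
    rcases le_total 0 w.re with h | h
    · exact key _ h
    · obtain ⟨x', h1, k, h2⟩ := key (-w.re) (by linarith)
      refine ⟨-x', ?_, k, ?_⟩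
      · rw [← abs_neg]; convert h1 using 2; ring
      · rw [← h2, mul_neg, Real.cosh_neg]
  obtain ⟨x', hx', k, hk⟩ := key2
  set j : ℤ := round (w.im / Real.pi) with hj
  have hpi := Real.pi_pos
  have hjb : |(j * Real.pi) - w.im| ≤ Real.pi / 2 := by
    have h1 := abs_sub_round (w.im / Real.pi)
    rw [← hj] at h1
    have h2 : (j * Real.pi) - w.im = -((w.im / Real.pi - j) * Real.pi) := by field_simp; ring
    rw [h2, abs_neg, abs_mul, abs_of_pos hpi]
    nlinarith
  refine ⟨x' + (j * Real.pi : ℝ) * I, ?_, k, ?_⟩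
  · refine (norm_le_abs_re_add_abs_im _).trans_lt ?_
    have : Real.pi < 3.15 := Real.pi_lt_d2
    simp only [sub_re, add_re, ofReal_re, mul_re, I_re, I_im, ofReal_im, sub_im, add_im, mul_im]
    simp only [mul_zero, mul_one, sub_zero, add_zero, zero_add]
    linarith
  · have h1 : cosh (2 * ((x':ℂ) + (j * Real.pi : ℝ) * I)) = 2 * k - 1 := by
      have : 2 * ((x':ℂ) + (j * Real.pi : ℝ) * I) = ((2 * x' : ℝ) : ℂ) + j * (2 * Real.pi * I) := by
        push_cast; ring
      rw [this, Complex.cosh, neg_add, exp_add, exp_add, ← neg_mul, ← Int.cast_neg,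
        exp_int_mul_two_pi_mul_I, exp_int_mul_two_pi_mul_I, mul_one, mul_one, ← Complex.cosh,
        ← ofReal_cosh, hk]
      push_cast; ring
    have h2 := Complex.cosh_two_mul ((x':ℂ) + (j * Real.pi : ℝ) * I)
    have h3 := Complex.cosh_sq ((x':ℂ) + (j * Real.pi : ℝ) * I)
    linear_combination (h1 - h2 + h3) / 2

lemma landau_aux {L : ℂ → ℂ} {s0 : ℂ} (hL : DifferentiableOn ℂ L (ball s0 40000))
    (hom : ∀ z ∈ ball s0 40000, ∀ k : ℤ, L z ≠ k * (2 * Real.pi * I))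
    (hre : |(L s0).re| ≤ 1) : L (s0 + 2 * Real.pi * I) ≠ L s0 + 4 * Real.pi * I := by
  intro hper
  have hpi := Real.pi_gt_three
  have hpi2 : Real.pi < 3.15 := Real.pi_lt_d2
  have hpiC : (Real.pi : ℂ) ≠ 0 := by exact_mod_cast Real.pi_ne_zero
  have h2pi : (2 * Real.pi * I : ℂ) ≠ 0 := by simp [hpiC]
  set k : ℤ := round ((L s0).im / (2 * Real.pi)) with hk
  set A : ℂ → ℂ := fun z => L z / (2 * Real.pi * I) - k with hA
  have hAd : DifferentiableOn ℂ A (ball s0 40000) := (hL.div_const _).sub_const _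
  have hAom : ∀ z ∈ ball s0 40000, ∀ j : ℤ, A z ≠ j := by
    intro z hz j hj
    apply hom z hz (j + k)
    simp only [hA] at hj
    rw [sub_eq_iff_eq_add, div_eq_iff h2pi] at hj
    rw [hj]; push_cast; ring
  have hs0 : s0 ∈ ball s0 40000 := mem_ball_self (by norm_num)
  have hA0 : ‖A s0‖ ≤ 1 := by
    have e : A s0 = (((L s0).im / (2 * Real.pi) - k : ℝ) : ℂ) +
        ((-(L s0).re / (2 * Real.pi) : ℝ) : ℂ) * I := by
      simp only [hA]
      have : L s0 = (L s0).re + (L s0).im * I := (re_add_im _).symm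
      rw [show L s0 / (2 * Real.pi * I) = ((L s0).re + (L s0).im * I) / (2 * Real.pi * I) by
        rw [← this]]
      push_cast
      field_simp
      ring_nf
      simp only [I_sq]
      ring
    rw [e]
    refine (norm_add_le _ _).trans ?_
    rw [norm_mul, norm_I, mul_one, norm_real, norm_real, Real.norm_eq_abs, Real.norm_eq_abs]
    have h1 := abs_sub_round ((L s0).im / (2 * Real.pi))
    rw [← hk] at h1
    have h2 : |(-(L s0).re / (2 * Real.pi))| ≤ 1 / 2 := by
      rw [abs_div, abs_neg, abs_of_pos (by linarith : 0 < 2 * Real.pi), div_le_iff₀ (by linarith)]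
      linarith
    linarith
  obtain ⟨a1, ha1d, ha1⟩ := exists_log_ball hAd (fun z hz => by simpa using hAom z hz 0)
  obtain ⟨a2, ha2d, ha2⟩ := exists_log_ball (hAd.sub_const 1) (fun z hz => by
    have := hAom z hz 1
    rw [Int.cast_one] at this
    exact sub_ne_zero.2 this)
  set α : ℂ → ℂ := fun z => exp (a1 z / 2) with hα
  set β : ℂ → ℂ := fun z => exp (a2 z / 2) with hβ
  have hα2 : ∀ z ∈ ball s0 40000, α z ^ 2 = A z := by
    intro z hz
    rw [ha1 z hz, hα]; simp only; rw [← exp_nat_mul]; congr 1; push_cast; ring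
  have hβ2 : ∀ z ∈ ball s0 40000, β z ^ 2 = A z - 1 := by
    intro z hz
    rw [ha2 z hz, hβ]; simp only; rw [← exp_nat_mul]; congr 1; push_cast; ring
  have hab : ∀ z ∈ ball s0 40000, (α z + β z) * (α z - β z) = 1 := by
    intro z hz
    linear_combination hα2 z hz - hβ2 z hz
  have hαd : DifferentiableOn ℂ α (ball s0 40000) := (ha1d.div_const 2).cexp
  have hβd : DifferentiableOn ℂ β (ball s0 40000) := (ha2d.div_const 2).cexp
  obtain ⟨q, hqd, hq⟩ := exists_log_ball (hαd.add hβd) (fun z hz => by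
    exact left_ne_zero_of_mul (b := α z - β z) (a := α z + β z) (by rw [hab z hz]; exact one_ne_zero))
  have hq' : ∀ z ∈ ball s0 40000, exp (q z) = α z + β z := fun z hz => (hq z hz).symm
  have hqn : ∀ z ∈ ball s0 40000, exp (-q z) = α z - β z := by
    intro z hz
    rw [exp_neg, hq' z hz]
    exact inv_eq_of_mul_eq_one_right (hab z hz)
  have hcosh : ∀ z ∈ ball s0 40000, cosh (q z) ^ 2 = A z := by
    intro z hz
    rw [Complex.cosh, hq' z hz, hqn z hz, ← hα2 z hz]; ring
  -- derivative bound
  have hqb : ∀ s ∈ closedBall s0 7, ‖deriv q s‖ ≤ 0.005 := by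
    intro s hs
    have hsub : closedBall s 39000 ⊆ ball s0 40000 := by
      intro z hz
      rw [mem_closedBall] at hz hs
      rw [mem_ball]
      linarith [dist_triangle z s s0]
    have := bloch_aux (f := q) (c := s) (r := 39000) (R := 3) isOpen_ball hsub (by norm_num) hqd
      (fun w => by
        obtain ⟨p, hp, j, hj⟩ := net_aux w
        refine ⟨p, hp, fun z hz he => ?_⟩
        apply hAom z (hsub hz) j
        rw [← hcosh z (hsub hz), he, hj])
    linarith
  have h7 : closedBall s0 7 ⊆ ball s0 40000 := closedBall_subset_ball (by norm_num)
  have hn2 : ‖(2 * Real.pi * I : ℂ)‖ = 2 * Real.pi := by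
    simp [abs_of_pos Real.pi_pos]
  have hs1 : s0 + 2 * Real.pi * I ∈ closedBall s0 7 := by
    rw [mem_closedBall, dist_eq_norm, add_sub_cancel_left, hn2]; linarith
  set s1 := s0 + 2 * Real.pi * I with hs1d
  have hd : ‖q s1 - q s0‖ ≤ 0.04 := by
    have := (convex_closedBall s0 7).norm_image_sub_le_of_norm_deriv_le (f := q) (𝕜 := ℂ)
      (fun x hx => hqd.differentiableAt (isOpen_ball.mem_nhds (h7 hx))) hqb
      (mem_closedBall_self (by norm_num)) hs1
    have e : s1 - s0 = 2 * Real.pi * I := by rw [hs1d]; ring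
    rw [e, hn2] at this
    linarith
  have hA2 : A s1 - A s0 = 2 := by
    simp only [hA]
    rw [hper]
    field_simp
    ring
  have nα : ‖α s0‖ ≤ 2 := by
    have : ‖α s0‖ ^ 2 ≤ 1 := by rw [← norm_pow, hα2 s0 hs0]; exact hA0
    nlinarith [norm_nonneg (α s0)]
  have nβ : ‖β s0‖ ≤ 2 := by
    have : ‖β s0‖ ^ 2 ≤ 2 := by
      rw [← norm_pow, hβ2 s0 hs0]
      refine (norm_sub_le _ _).trans ?_
      rw [norm_one]; linarith
    nlinarith [norm_nonneg (β s0)]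
  have nE : ‖exp (q s0)‖ ≤ 4 := by
    rw [hq' s0 hs0]; exact (norm_add_le _ _).trans (by linarith)
  have nE' : ‖exp (-q s0)‖ ≤ 4 := by
    rw [hqn s0 hs0]; exact (norm_sub_le _ _).trans (by linarith)
  set d := q s1 - q s0 with hdd
  have hform : A s1 - A s0 = (exp (q s0) ^ 2 * (exp (2 * d) - 1) +
      exp (-q s0) ^ 2 * (exp (-(2 * d)) - 1)) / 4 := by
    rw [← hcosh s1 (h7 hs1), ← hcosh s0 hs0, Complex.cosh, Complex.cosh]
    have e1 : exp (q s1) = exp (q s0) * exp d := by rw [← exp_add, hdd]; ring_nf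
    have e2 : exp (-q s1) = exp (-q s0) * exp (-d) := by rw [← exp_add, hdd]; ring_nf
    have e3 : exp (2 * d) = exp d ^ 2 := by rw [← exp_nat_mul]; norm_num
    have e4 : exp (-(2 * d)) = exp (-d) ^ 2 := by rw [← exp_nat_mul]; norm_num
    have e5 : exp (q s0) * exp (-q s0) = 1 := by rw [← exp_add]; simp
    have e6 : exp d * exp (-d) = 1 := by rw [← exp_add]; simp
    rw [e1, e2, e3, e4]
    linear_combination (exp (q s0) * exp (-q s0) / 2) * e6
  have n2d : ‖2 * d‖ ≤ 0.08 := by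
    rw [norm_mul, Complex.norm_ofNat]; linarith
  have b1 : ‖exp (2 * d) - 1‖ ≤ 0.16 := by
    have := norm_exp_sub_one_le (x := 2 * d) (by linarith)
    linarith
  have b2 : ‖exp (-(2 * d)) - 1‖ ≤ 0.16 := by
    have := norm_exp_sub_one_le (x := -(2 * d)) (by rw [norm_neg]; linarith)
    rw [norm_neg] at this
    linarith
  have hfin : ‖A s1 - A s0‖ ≤ (4 ^ 2 * 0.16 + 4 ^ 2 * 0.16) / 4 := by
    rw [hform, norm_div, Complex.norm_ofNat]
    gcongr
    refine (norm_add_le _ _).trans ?_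
    rw [norm_mul, norm_mul, norm_pow, norm_pow]
    gcongr
  rw [hA2, Complex.norm_ofNat] at hfin
  norm_num at hfin

theorem no_jointly_invertible_h :
    ∃ n : ℕ, ¬ ∃ h : ℂ → ℂ, IsRDisc h ∧
      IsRDiscUnit (fun z => 1 + h z * z ^ 2) ∧
      IsRDiscUnit (fun z => (n : ℂ) ^ 2 * z ^ 2 + h z) := by
  obtain ⟨ρ, hρ⟩ : ∃ ρ : ℝ, ρ = 40000 := ⟨_, rfl⟩
  have hρ0 : 0 < ρ := by rw [hρ]; norm_num
  obtain ⟨n, hn⟩ := exists_nat_gt (Real.exp (4 * ρ))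
  refine ⟨n, ?_⟩
  rintro ⟨h, -, ⟨⟨huc, hud, hus⟩, hu0⟩, ⟨⟨-, hvd, -⟩, hv0⟩⟩
  have hn0 : (0 : ℝ) < n := (Real.exp_pos _).trans hn
  have hnC : (n : ℂ) ≠ 0 := by exact_mod_cast hn0.ne'
  obtain ⟨u, hu⟩ : ∃ u : ℂ → ℂ, u = fun z => 1 + h z * z ^ 2 := ⟨_, rfl⟩
  obtain ⟨v, hv⟩ : ∃ v : ℂ → ℂ, v = fun z => (n : ℂ) ^ 2 * z ^ 2 + h z := ⟨_, rfl⟩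
  have hus' : ∀ z ∈ closedBall (0 : ℂ) 1, u z = conj (u (conj z)) := by
    rw [hu]; exact hus
  rw [← hu] at huc hud hu0
  rw [← hv] at hvd hv0
  have hrel : ∀ z, u z - z ^ 2 * v z = 1 - n ^ 2 * z ^ 4 := by
    intro z; rw [hu, hv]; ring
  obtain ⟨a, had, ha⟩ := exists_log_ball hud (fun z hz => hu0 z (ball_subset_closedBall hz))
  obtain ⟨b, hbd, hb⟩ := exists_log_ball hvd (fun z hz => hv0 z (ball_subset_closedBall hz))
  have hball : ∀ s : ℂ, s.re < 0 → exp s ∈ ball (0 : ℂ) 1 := by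
    intro s hs
    rw [mem_ball_zero_iff, norm_exp]
    exact Real.exp_lt_one_iff.2 hs
  obtain ⟨L, hL⟩ : ∃ L : ℂ → ℂ, L = fun s => b (exp s) - a (exp s) + 2 * s := ⟨_, rfl⟩
  have hbd' : ∀ s : ℂ, s.re < 0 → DifferentiableAt ℂ (fun s => b (exp s)) s := by
    intro s hs
    exact DifferentiableAt.comp s (hbd.differentiableAt (isOpen_ball.mem_nhds (hball s hs)))
      differentiable_exp.differentiableAt
  have had' : ∀ s : ℂ, s.re < 0 → DifferentiableAt ℂ (fun s => a (exp s)) s := by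
    intro s hs
    exact DifferentiableAt.comp s (had.differentiableAt (isOpen_ball.mem_nhds (hball s hs)))
      differentiable_exp.differentiableAt
  have hLd : ∀ s : ℂ, s.re < 0 → DifferentiableAt ℂ L s := by
    intro s hs
    rw [hL]
    exact ((hbd' s hs).sub (had' s hs)).add (by fun_prop)
  have hLexp : ∀ s : ℂ, s.re < 0 → u (exp s) * exp (L s) = exp s ^ 2 * v (exp s) := by
    intro s hs
    rw [ha _ (hball s hs), hb _ (hball s hs), hL, ← exp_nat_mul, ← exp_add, ← exp_add]
    congr 1; push_cast; ring
  have hexpper : ∀ s : ℂ, exp (s + 2 * Real.pi * I) = exp s := exp_periodic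
  have hLper : ∀ s : ℂ, L (s + 2 * Real.pi * I) = L s + 4 * Real.pi * I := by
    intro s
    rw [hL]; simp only [hexpper]; ring
  have hbig : ∀ s : ℂ, -(2 * ρ) < s.re → 1 < ‖(n : ℂ) ^ 2 * exp s ^ 4‖ := by
    intro s hs
    rw [norm_mul, norm_pow, norm_pow, norm_exp, Complex.norm_natCast, ← Real.exp_nat_mul]
    have h1 : Real.exp (-(8 * ρ)) < Real.exp ((4 : ℕ) * s.re) := by
      apply Real.exp_lt_exp.2; push_cast; linarith
    have h2 : Real.exp (8 * ρ) < (n : ℝ) ^ 2 := by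
      have : Real.exp (8 * ρ) = Real.exp (4 * ρ) ^ 2 := by
        rw [← Real.exp_nat_mul]; congr 1; push_cast; ring
      rw [this]; gcongr
    calc (1 : ℝ) = Real.exp (8 * ρ) * Real.exp (-(8 * ρ)) := by rw [← Real.exp_add]; simp
      _ < _ := mul_lt_mul'' h2 h1 (Real.exp_pos _).le (Real.exp_pos _).le
  have hom : ∀ s : ℂ, -(2 * ρ) < s.re → s.re < 0 → exp (L s) ≠ 1 := by
    intro s h1 h2 h3
    have h4 := hLexp s h2
    have h5 := hrel (exp s)
    rw [← h4, h3] at h5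
    have h6 : (n : ℂ) ^ 2 * exp s ^ 4 = 1 := by linear_combination h5
    have h7 := hbig s h1
    rw [h6, norm_one] at h7
    exact lt_irrefl _ h7
  have hureal : ∀ x : ℝ, x ∈ Set.Icc (0 : ℝ) 1 → u x = ((u x).re : ℂ) := by
    intro x hx
    have h1 := hus' x (by rw [mem_closedBall_zero_iff, norm_real, Real.norm_eq_abs,
      abs_of_nonneg hx.1]; exact hx.2)
    rw [conj_ofReal] at h1
    exact (conj_eq_iff_re.1 h1.symm).symm
  have hmem : ∀ x : ℝ, x ∈ Set.Icc (0 : ℝ) 1 → (x : ℂ) ∈ closedBall (0 : ℂ) 1 := by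
    intro x hx
    rw [mem_closedBall_zero_iff, norm_real, Real.norm_eq_abs, abs_of_nonneg hx.1]; exact hx.2
  have hupos : ∀ x : ℝ, x ∈ Set.Icc (0 : ℝ) 1 → 0 < (u x).re := by
    intro x hx
    by_contra hneg
    push Not at hneg
    have hc : ContinuousOn (fun x : ℝ => (u x).re) (Set.Icc 0 x) := by
      refine continuous_re.comp_continuousOn (huc.comp continuous_ofReal.continuousOn ?_)
      intro y hy
      exact hmem y ⟨hy.1, hy.2.trans hx.2⟩
    obtain ⟨y, hy, hy0⟩ := intermediate_value_Icc' hx.1 hc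
      (show (0 : ℝ) ∈ _ from ⟨hneg, by simp [hu]⟩)
    have hy1 : y ∈ Set.Icc (0 : ℝ) 1 := ⟨hy.1, hy.2.trans hx.2⟩
    apply hu0 y (hmem y hy1)
    rw [hureal y hy1]
    simp only at hy0
    rw [hy0]; simp
  have hLr : 0 < (L (-ρ : ℝ)).re := by
    have hr : Real.exp (-ρ) ∈ Set.Icc (0 : ℝ) 1 :=
      ⟨(Real.exp_pos _).le, Real.exp_le_one_iff.2 (by linarith)⟩
    have h1 := hLexp (-ρ : ℝ) (by rw [ofReal_re]; linarith)
    have h2 := hrel (exp (-ρ : ℝ))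
    have h3 := hbig (-ρ : ℝ) (by rw [ofReal_re]; linarith)
    rw [← ofReal_exp] at h1 h2 h3
    rw [← h1, hureal _ hr] at h2
    have h4 := hupos _ hr
    set U := (u (Real.exp (-ρ) : ℝ)).re
    have h5 : exp (L (-ρ : ℝ)) = ((1 + (n ^ 2 * Real.exp (-ρ) ^ 4 - 1) / U : ℝ) : ℂ) := by
      have hU : (U : ℂ) ≠ 0 := by exact_mod_cast h4.ne'
      push_cast at h2 ⊢
      field_simp
      linear_combination -h2
    have h6 : 1 < (n : ℝ) ^ 2 * Real.exp (-ρ) ^ 4 := by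
      rw [norm_mul, norm_pow, norm_pow, Complex.norm_natCast, norm_real, Real.norm_eq_abs,
        abs_of_pos (Real.exp_pos _)] at h3
      exact h3
    have h7 := congrArg (fun z : ℂ => ‖z‖) h5
    simp only [norm_exp, norm_real, Real.norm_eq_abs] at h7
    have h8 : 0 < ((n : ℝ) ^ 2 * Real.exp (-ρ) ^ 4 - 1) / U := div_pos (by linarith) h4
    rw [abs_of_pos (by linarith)] at h7
    rw [← Real.one_lt_exp_iff, h7]
    linarith
  -- the vertical line
  obtain ⟨γ, hγ⟩ : ∃ γ : ℝ → ℂ, γ = fun y : ℝ => ((-ρ : ℝ) : ℂ) + (y : ℂ) * I := ⟨_, rfl⟩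
  have hγre : ∀ y, (γ y).re = -ρ := by intro y; rw [hγ]; simp
  have hγd : ∀ y, HasDerivAt γ I y := by
    intro y
    rw [hγ]
    simpa using ((hasDerivAt_id y).ofReal_comp.mul_const I).const_add ((-ρ : ℝ) : ℂ)
  have hγ0 : γ 0 = (-ρ : ℝ) := by rw [hγ]; simp
  have hneg : ∀ y, (γ y).re < 0 := by intro y; rw [hγre]; linarith
  have hgt : ∀ y, -(2 * ρ) < (γ y).re := by intro y; rw [hγre]; linarith
  by_cases hall : ∀ y : ℝ, 1 < (L (γ y)).re
  · -- argument principle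
    obtain ⟨Ψ, hΨ⟩ : ∃ Ψ : ℂ → ℂ, Ψ = fun s => 2 * s - b (exp s) +
      log (1 - ((n : ℂ) ^ 2 * exp s ^ 4)⁻¹) - log (1 - exp (-L s)) := ⟨_, rfl⟩
    have hsl : ∀ x : ℂ, ‖x‖ < 1 → 1 - x ∈ slitPlane := by
      intro x hx
      rw [sub_eq_add_neg]
      exact mem_slitPlane_of_norm_lt_one (by rwa [norm_neg])
    have hs1 : ∀ y, 1 - ((n : ℂ) ^ 2 * exp (γ y) ^ 4)⁻¹ ∈ slitPlane := by
      intro y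
      apply hsl
      rw [norm_inv]
      exact inv_lt_one_of_one_lt₀ (hbig _ (hgt y))
    have hs2 : ∀ y, 1 - exp (-L (γ y)) ∈ slitPlane := by
      intro y
      apply hsl
      rw [norm_exp, neg_re]
      exact Real.exp_lt_one_iff.2 (by linarith [hall y])
    have hΨd : ∀ y, DifferentiableAt ℂ Ψ (γ y) := by
      intro y
      rw [hΨ]
      refine DifferentiableAt.sub (DifferentiableAt.add (DifferentiableAt.sub (by fun_prop)
        (hbd' _ (hneg y))) (DifferentiableAt.clog ?_ (hs1 y))) (DifferentiableAt.clog ?_ (hs2 y))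
      · refine DifferentiableAt.const_sub (DifferentiableAt.inv (by fun_prop) ?_) _
        exact mul_ne_zero (pow_ne_zero _ hnC) (pow_ne_zero _ (exp_ne_zero _))
      · exact ((hLd _ (hneg y)).neg.cexp).const_sub _
    have hexpΨ : ∀ y, exp (Ψ (γ y)) = ((n : ℂ) ^ 2)⁻¹ := by
      intro y
      have hz := exp_ne_zero (γ y)
      have h1 := hLexp _ (hneg y)
      have h2 := hrel (exp (γ y))
      have hB := hball _ (hneg y)
      have hu' := hu0 _ (ball_subset_closedBall hB)
      have hv' := hv0 _ (ball_subset_closedBall hB)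
      have n1 := slitPlane_ne_zero (hs1 y)
      have n2 := slitPlane_ne_zero (hs2 y)
      have e1 : exp (-L (γ y)) = u (exp (γ y)) / (exp (γ y) ^ 2 * v (exp (γ y))) := by
        rw [exp_neg, ← h1]
        field_simp
      have e2 : exp (2 * γ y) = exp (γ y) ^ 2 := by rw [← exp_nat_mul]; norm_num
      rw [hΨ]
      simp only
      rw [exp_sub, exp_add, exp_sub, exp_log n1, exp_log n2, ← hb _ hB, e2]
      rw [div_eq_iff n2, e1]
      field_simp
      linear_combination h2
    have hφd : ∀ y, HasDerivAt (fun y => Ψ (γ y)) (deriv Ψ (γ y) * I) y := by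
      intro y
      exact (hΨd y).hasDerivAt.comp y (hγd y)
    have hφ0 : ∀ y, deriv Ψ (γ y) * I = 0 := by
      intro y
      have h1 := (hφd y).cexp
      have h2 : (fun y => exp (Ψ (γ y))) = fun _ => ((n : ℂ) ^ 2)⁻¹ := funext hexpΨ
      rw [h2] at h1
      have h3 := h1.unique (hasDerivAt_const y _)
      exact (mul_eq_zero.1 h3).resolve_left (exp_ne_zero _)
    have hconst := is_const_of_deriv_eq_zero (f := fun y => Ψ (γ y))
      (fun y => (hφd y).differentiableAt) (fun y => by rw [(hφd y).deriv, hφ0 y])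
      (2 * Real.pi) 0
    have hγ2 : γ (2 * Real.pi) = γ 0 + 2 * Real.pi * I := by
      rw [hγ]; push_cast; ring
    have hexpL : exp (-L (γ 0 + 2 * Real.pi * I)) = exp (-L (γ 0)) := by
      rw [hLper, show -(L (γ 0) + 4 * Real.pi * I) = -L (γ 0) - (2 : ℕ) • (2 * Real.pi * I) by
        simp; ring]
      exact exp_periodic.sub_nsmul_eq 2
    rw [hγ2, hΨ] at hconst
    simp only [hexpper, hexpL] at hconst
    have h0 : (4 * Real.pi * I : ℂ) = 0 := by linear_combination hconst
    simp [Real.pi_ne_zero] at h0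
  · push Not at hall
    obtain ⟨y, hy0, hy1⟩ : ∃ y, 0 ≤ (L (γ y)).re ∧ (L (γ y)).re ≤ 1 := by
      rcases le_total (L (γ 0)).re 1 with h1 | h1
      · exact ⟨0, by rw [hγ0]; exact hLr.le, h1⟩
      · have hc : Continuous fun y => (L (γ y)).re := by
          refine continuous_re.comp (continuous_iff_continuousAt.2 fun y => ?_)
          exact ContinuousAt.comp (hLd _ (hneg y)).continuousAt (hγd y).continuousAt
        obtain ⟨y, hy⟩ := mem_range_of_exists_le_of_exists_ge hc hall ⟨0, h1⟩
        simp only at hy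
        exact ⟨y, by rw [hy]; norm_num, hy.le⟩
    have hstrip : ∀ z ∈ ball (γ y) 40000, -(2 * ρ) < z.re ∧ z.re < 0 := by
      intro z hz
      rw [mem_ball, dist_eq_norm, ← hρ] at hz
      have h1 := (abs_re_le_norm (z - γ y)).trans_lt hz
      rw [sub_re, hγre, abs_lt] at h1
      constructor <;> linarith
    refine landau_aux (L := L) (s0 := γ y) (fun z hz => (hLd z (hstrip z hz).2).differentiableWithinAt)
      (fun z hz k hk => hom z (hstrip z hz).1 (hstrip z hz).2 ?_)
      (abs_le.2 ⟨by linarith, hy1⟩) (hLper _)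
    rw [hk, exp_int_mul_two_pi_mul_I]
end

section
/- There exists an invertible pair (f,g) in the real disc algebra A_ℝ(D) such that f is positive at every real zero of g, g is positive at every real zero of f, and yet whenever α, β ∈ A_ℝ(D) satisfy αf + βg = 1, at least one of α, β is not a unit of A_ℝ(D). -/
open Complex Metric ComplexConjugate

open Filter Topology in
lemma aux_log (f : ℂ → ℂ) (hf : DifferentiableOn ℂ f (ball 0 1))
    (h0 : ∀ z ∈ ball (0 : ℂ) 1, f z ≠ 0) :
    ∃ L : ℂ → ℂ, DifferentiableOn ℂ L (ball 0 1) ∧ ∀ z ∈ ball (0 : ℂ) 1, f z = Complex.exp (L z) := by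
  have hd : DifferentiableOn ℂ (fun z => deriv f z / f z) (ball 0 1) :=
    (hf.deriv isOpen_ball).div hf h0
  obtain ⟨L, hL0, hL⟩ := hd.isExactOn_ball.with_val_at 0 (Complex.log (f 0))
  have m0 : (0 : ℂ) ∈ ball (0 : ℂ) 1 := by simp
  refine ⟨L, fun z hz => (hL z hz).differentiableAt.differentiableWithinAt, fun z hz => ?_⟩
  have key : ∀ x ∈ ball (0 : ℂ) 1,
      HasDerivWithinAt (fun z => f z * Complex.exp (-L z)) 0 (ball 0 1) x := by
    intro x hx
    have h1 := (hf.differentiableAt (isOpen_ball.mem_nhds hx)).hasDerivAt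
    have h2 := (hL x hx).neg.cexp
    have h3 := (h1.mul h2).hasDerivWithinAt (s := ball 0 1)
    refine h3.congr_deriv ?_
    have := h0 x hx
    field_simp
    ring
  have := (convex_ball (0 : ℂ) 1).norm_image_sub_le_of_norm_hasDerivWithin_le (C := 0) key
    (by simp) m0 hz
  simp only [zero_mul, norm_le_zero_iff, hL0, sub_eq_zero, Complex.exp_neg,
    Complex.exp_log (h0 0 m0), mul_inv_cancel₀ (h0 0 m0)] at this
  have he := Complex.exp_ne_zero (L z)
  field_simp at this
  exact this

lemma aux_sqrt (f : ℂ → ℂ) (hf : DifferentiableOn ℂ f (ball 0 1))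
    (h0 : ∀ z ∈ ball (0 : ℂ) 1, f z ≠ 0) :
    ∃ A : ℂ → ℂ, DifferentiableOn ℂ A (ball 0 1) ∧ ∀ z ∈ ball (0 : ℂ) 1, f z = A z ^ 2 := by
  obtain ⟨L, hL, h⟩ := aux_log f hf h0
  refine ⟨fun z => Complex.exp (L z / 2), (hL.div_const 2).cexp, fun z hz => ?_⟩
  rw [h z hz, ← Complex.exp_nat_mul]
  congr 1
  push_cast
  ring

lemma aux_cos (P Q : ℂ → ℂ) (hP : DifferentiableOn ℂ P (ball 0 1))
    (hQ : DifferentiableOn ℂ Q (ball 0 1))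
    (h : ∀ z ∈ ball (0 : ℂ) 1, P z ^ 2 + Q z ^ 2 = 1) :
    ∃ w : ℂ → ℂ, DifferentiableOn ℂ w (ball 0 1) ∧
      ∀ z ∈ ball (0 : ℂ) 1, P z = Complex.cos (w z) ∧ Q z = Complex.sin (w z) := by
  have e : ∀ z ∈ ball (0 : ℂ) 1, (P z + Q z * I) * (P z - Q z * I) = 1 := by
    intro z hz
    rw [← h z hz]
    ring_nf
    rw [I_sq]; ring
  obtain ⟨L, hL, hh⟩ := aux_log (fun z => P z + Q z * I) (hP.add (hQ.mul_const I)) (by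
    intro z hz h0
    have := e z hz
    rw [h0] at this; simp at this)
  refine ⟨fun z => -(L z * I), (hL.mul_const I).neg, fun z hz => ?_⟩
  have h1 := hh z hz
  have h2 := e z hz
  have h3 : P z - Q z * I = Complex.exp (-L z) := by
    rw [Complex.exp_neg, ← h1]
    exact eq_inv_of_mul_eq_one_right h2
  have e1 : -(L z * I) * I = L z := by ring_nf; rw [I_sq]; ring
  have e2 : -(-(L z * I)) * I = -L z := by ring_nf; rw [I_sq]; ring
  rw [Complex.cos, Complex.sin, e1, e2, ← h1, ← h3]
  refine ⟨by ring, ?_⟩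
  ring_nf
  rw [I_sq]; ring

lemma aux_net (ξ : ℂ) : ∃ t : ℂ, t ∈ ball ξ 4 ∧ ∃ k : ℤ, k ≠ 0 ∧ Complex.cos t = k := by
  have hn : |ξ.re / Real.pi - round (ξ.re / Real.pi)| ≤ 1 / 2 := abs_sub_round _
  set n : ℤ := round (ξ.re / Real.pi)
  -- vertical part
  have hcv : ∃ τ : ℝ, |τ - ξ.im| ≤ 2 ∧ ∃ k : ℤ, k ≠ 0 ∧ Real.cosh τ = k := by
    have hpos : ∀ y : ℝ, 0 ≤ y → ∃ τ : ℝ, |τ - y| ≤ 2 ∧ ∃ k : ℤ, k ≠ 0 ∧ Real.cosh τ = k := by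
      intro y hy
      have h2 : 2 ≤ Real.cosh 2 := by
        rw [Real.cosh_eq]
        have a1 := Real.quadratic_le_exp_of_nonneg (x := 2) (by norm_num)
        have a2 := Real.exp_pos (-2)
        linarith
      have hge : Real.cosh y + 1 ≤ Real.cosh (y + 2) := by
        rw [Real.cosh_add]
        have b1 := Real.one_le_cosh y
        have b2 : 0 ≤ Real.sinh y := Real.sinh_nonneg_iff.2 hy
        have b3 : 0 ≤ Real.sinh 2 := Real.sinh_nonneg_iff.2 (by norm_num)
        nlinarith [mul_nonneg b2 b3]
      have hm : ((⌈Real.cosh y⌉ : ℤ) : ℝ) ∈ Set.Icc (Real.cosh y) (Real.cosh (y + 2)) :=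
        ⟨Int.le_ceil _, (Int.ceil_lt_add_one _).le.trans hge⟩
      obtain ⟨τ, hτ, h⟩ := intermediate_value_Icc (by linarith : y ≤ y + 2)
        Real.continuous_cosh.continuousOn hm
      refine ⟨τ, ?_, _, ?_, h⟩
      · rw [abs_le]; constructor <;> linarith [hτ.1, hτ.2]
      · have := Int.ceil_pos.2 (Real.cosh_pos y)
        omega
    rcases le_total 0 ξ.im with h | h
    · exact hpos _ h
    · obtain ⟨τ, h1, k, hk, h2⟩ := hpos (-ξ.im) (by linarith)
      refine ⟨-τ, ?_, k, hk, by rw [Real.cosh_neg, h2]⟩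
      rw [abs_le] at h1 ⊢
      constructor <;> linarith [h1.1, h1.2]
  obtain ⟨τ, hτ, k, hk, hc⟩ := hcv
  refine ⟨(n : ℂ) * Real.pi + τ * I, ?_, (-1) ^ n.natAbs * k, ?_, ?_⟩
  · rw [mem_ball, dist_eq_norm]
    refine (Complex.norm_le_abs_re_add_abs_im _).trans_lt ?_
    have hre : |n * Real.pi - ξ.re| ≤ Real.pi / 2 := by
      have : n * Real.pi - ξ.re = -(ξ.re / Real.pi - n) * Real.pi := by
        field_simp; ring
      rw [this, abs_mul, abs_neg, abs_of_pos Real.pi_pos]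
      nlinarith [Real.pi_pos]
    have hpi := Real.pi_lt_four
    simp
    linarith
  · simp [hk]
  · rw [Complex.cos_add, Complex.cos_mul_I, Complex.sin_int_mul_pi, ← Complex.ofReal_cosh, hc]
    have : Complex.cos (n * Real.pi) = (-1) ^ n.natAbs := by
      have h1 : Complex.cos (n * Real.pi) = Complex.cos ((n.natAbs : ℕ) * Real.pi) := by
        rcases Int.natAbs_eq n with h | h
        · conv_lhs => rw [h, Int.cast_natCast]
        · conv_lhs => rw [h, Int.cast_neg, Int.cast_natCast, neg_mul, Complex.cos_neg]
      rw [h1]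
      exact_mod_cast congrArg Complex.ofReal (Real.cos_nat_mul_pi n.natAbs)
    rw [this]; push_cast; ring

open Filter Topology in
lemma aux_bloch (u : ℂ → ℂ) (hu : DifferentiableOn ℂ u (ball 0 1))
    (hn : ∀ ξ : ℂ, ∃ t ∈ ball ξ 4, ∀ z ∈ ball (0 : ℂ) 1, u z ≠ t) :
    ∀ z ∈ closedBall (0 : ℂ) (3/4), ‖deriv u z‖ * (3/4 - ‖z‖) ≤ 192 := by
  have hsub : closedBall (0 : ℂ) (3/4) ⊆ ball 0 1 := closedBall_subset_ball (by norm_num)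
  have hdu : DifferentiableOn ℂ (deriv u) (ball 0 1) := hu.deriv isOpen_ball
  have hda : ∀ z ∈ ball (0 : ℂ) 1, HasDerivAt u (deriv u z) z := fun z hz =>
    (hu.differentiableAt (isOpen_ball.mem_nhds hz)).hasDerivAt
  have hcont : ContinuousOn (fun z => ‖deriv u z‖ * (3/4 - ‖z‖)) (closedBall (0 : ℂ) (3/4)) :=
    ((hdu.continuousOn.mono hsub).norm).mul (by fun_prop)
  obtain ⟨p, hp, hmax⟩ := (isCompact_closedBall (0 : ℂ) (3/4)).exists_isMaxOn
    ⟨0, by simp; norm_num⟩ hcont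
  by_contra! hcon
  obtain ⟨z0, hz0, hz0'⟩ := hcon
  have hM : 192 < ‖deriv u p‖ * (3/4 - ‖p‖) := hz0'.trans_le (hmax hz0)
  have hp1 : ‖p‖ ≤ 3/4 := by simpa using hp
  have hp2 : ‖p‖ < 3/4 := by
    by_contra! hh
    have : ‖p‖ = 3/4 := le_antisymm hp1 hh
    rw [this] at hM; norm_num at hM
  set D := ‖deriv u p‖ with hD
  have hDpos : 0 < D := by
    by_contra! hh
    nlinarith
  obtain ⟨ρ, hρ⟩ : ∃ ρ, ρ = (3/4 - ‖p‖) / 2 := ⟨_, rfl⟩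
  have hρ0 : 0 < ρ := by rw [hρ]; linarith
  have hDρ : 96 < D * ρ := by rw [hρ]; linarith
  have hnb : ∀ z ∈ ball p ρ, ‖z‖ < 3/4 - ρ := by
    intro z hz
    rw [mem_ball, dist_eq_norm] at hz
    have := norm_add_le p (z - p)
    rw [add_sub_cancel] at this
    linarith
  have hsub2 : ball p ρ ⊆ closedBall (0 : ℂ) (3/4) := by
    intro z hz
    have := hnb z hz
    simp; linarith
  have hbd : ∀ z ∈ ball p ρ, ‖deriv u z‖ ≤ 2 * D := by
    intro z hz
    have h1 : ‖deriv u z‖ * (3/4 - ‖z‖) ≤ D * (3/4 - ‖p‖) := hmax (hsub2 hz)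
    have h2 := hnb z hz
    have h3 : ‖deriv u z‖ * ρ ≤ ‖deriv u z‖ * (3/4 - ‖z‖) := by gcongr; linarith
    have h4 : ‖deriv u z‖ * ρ ≤ (2 * D) * ρ := by nlinarith
    exact le_of_mul_le_mul_right h4 hρ0
  have hsch : ∀ z ∈ ball p ρ, ‖deriv u z - deriv u p‖ ≤ 3 * D / ρ * ‖z - p‖ := by
    intro z hz
    have := Complex.dist_le_div_mul_dist_of_mapsTo_ball (f := deriv u) (c := p) (R₁ := ρ)
      (R₂ := 3 * D) (hdu.mono (hsub2.trans hsub)) (by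
        intro y hy
        rw [mem_closedBall, dist_eq_norm]
        have := norm_sub_le (deriv u y) (deriv u p)
        have := hbd y hy
        linarith) hz
    rwa [dist_eq_norm, dist_eq_norm] at this
  have hcb : closedBall p (ρ/6) ⊆ ball p ρ := closedBall_subset_ball (by linarith)
  have hmv : ∀ z ∈ closedBall p (ρ/6),
      ‖(u z - deriv u p * z) - (u p - deriv u p * p)‖ ≤ D / 2 * ‖z - p‖ := by
    intro z hz
    refine (convex_closedBall p (ρ/6)).norm_image_sub_le_of_norm_hasDerivWithin_le
      (f := fun z => u z - deriv u p * z) (f' := fun z => deriv u z - deriv u p * 1) ?_ ?_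
      (mem_closedBall_self (by linarith)) hz
    · intro x hx
      exact ((hda x (hsub (hsub2 (hcb hx)))).sub ((hasDerivAt_id x).const_mul _)).hasDerivWithinAt
    · intro x hx
      rw [mul_one]
      refine (hsch x (hcb hx)).trans ?_
      rw [mem_closedBall, dist_eq_norm] at hx
      calc 3 * D / ρ * ‖x - p‖ ≤ 3 * D / ρ * (ρ / 6) := by gcongr
        _ = D / 2 := by field_simp; ring
  have hcover := DiffContOnCl.ball_subset_image_closedBall (f := u) (z₀ := p) (r := ρ/6) (ε := 8)
    (by
      refine DifferentiableOn.diffContOnCl ?_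
      refine hu.mono (closure_ball_subset_closedBall.trans (hcb.trans (hsub2.trans hsub))))
    (by linarith) (by
      intro z hz
      have h1 := hmv z (sphere_subset_closedBall hz)
      have h2 : ‖z - p‖ = ρ / 6 := by rwa [mem_sphere, dist_eq_norm] at hz
      have h3 : ‖deriv u p * (z - p)‖ = D * (ρ / 6) := by rw [norm_mul, h2]
      have h4 : deriv u p * (z - p) = (u z - u p) -
        ((u z - deriv u p * z) - (u p - deriv u p * p)) := by ring
      have h5 := norm_sub_le (u z - u p) ((u z - deriv u p * z) - (u p - deriv u p * p))
      rw [← h4, h3] at h5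
      rw [h2] at h1
      nlinarith)
    (by
      have h1 := (hda p (hsub hp)).eventually_ne (c := u p) (norm_pos_iff.1 hDpos)
      exact h1.frequently.filter_mono nhdsWithin_le_nhds)
  obtain ⟨t, ht, hne⟩ := hn (u p)
  obtain ⟨z, hz, hzt⟩ := hcover (by norm_num; simpa using ht)
  exact hne z (hsub (hsub2 (hcb hz))) hzt

lemma aux_main : ∃ a : ℝ, 0 < a ∧ a ≤ 1/4 ∧ ∀ s : ℂ → ℂ, DifferentiableOn ℂ s (ball 0 1) →
    (∀ z ∈ ball (0 : ℂ) 1, ∀ k : ℤ, k ≠ 0 → s z ≠ k) → s 0 = 0 → ‖s a‖ < 1/2 := by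
  obtain ⟨δ, hδ, hs⟩ := Metric.continuousAt_iff.1 (Complex.continuous_sin.continuousAt (x := 0))
    (1/2) (by norm_num)
  simp only [Complex.sin_zero, dist_zero_right] at hs
  refine ⟨min (1/4) (δ/1000), by positivity, min_le_left _ _, ?_⟩
  intro s hd hom h0
  set a : ℝ := min (1/4) (δ/1000) with ha
  have ha0 : 0 < a := by positivity
  have ha1 : a ≤ 1/4 := min_le_left _ _
  have ha2 : a ≤ δ/1000 := min_le_right _ _
  obtain ⟨C, hC, hC2⟩ := aux_sqrt (fun z => 1 - s z ^ 2) ((hd.pow 2).const_sub 1) (by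
    intro z hz h
    have h1 := hom z hz 1 (by norm_num)
    have h2 := hom z hz (-1) (by norm_num)
    have : (s z - 1) * (s z + 1) = 0 := by linear_combination -h
    rcases mul_eq_zero.1 this with h | h
    · exact h1 (by push_cast; linear_combination h)
    · exact h2 (by push_cast; linear_combination h))
  obtain ⟨u, hu, huc⟩ := aux_cos s C hd hC (by
    intro z hz
    rw [← hC2 z hz]; ring)
  have hb := aux_bloch u hu (by
    intro ξ
    obtain ⟨t, ht, k, hk, hk2⟩ := aux_net ξ
    refine ⟨t, ht, fun z hz h => hom z hz k hk ?_⟩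
    rw [(huc z hz).1, h, hk2])
  have m0 : (0 : ℂ) ∈ ball (0 : ℂ) 1 := by simp
  have hsub : closedBall (0 : ℂ) (1/4) ⊆ ball 0 1 := closedBall_subset_ball (by norm_num)
  have ma : (a : ℂ) ∈ closedBall (0 : ℂ) (1/4) := by
    simp [abs_of_pos ha0]; linarith
  have hmv := (convex_closedBall (0 : ℂ) (1/4)).norm_image_sub_le_of_norm_hasDerivWithin_le
    (f := u) (f' := deriv u) (C := 400) (fun x hx =>
      (hu.differentiableAt (isOpen_ball.mem_nhds (hsub hx))).hasDerivAt.hasDerivWithinAt)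
    (by
      intro x hx
      have hx' : ‖x‖ ≤ 1/4 := by simpa using hx
      have := hb x (by simp; linarith)
      have h5 := norm_nonneg (deriv u x)
      nlinarith) (mem_closedBall_self (by norm_num)) ma
  have hd2 : ‖u a - u 0‖ < δ := by
    refine hmv.trans_lt ?_
    simp [abs_of_pos ha0]
    linarith
  have h3 := hs hd2
  have c0 : Complex.cos (u 0) = 0 := by rw [← (huc 0 m0).1, h0]
  have c1 : ‖Complex.sin (u 0)‖ = 1 := by
    have := Complex.sin_sq_add_cos_sq (u 0)
    rw [c0] at this
    have h : ‖Complex.sin (u 0)‖ ^ 2 = 1 := by 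
      rw [← norm_pow, show Complex.sin (u 0) ^ 2 = 1 by linear_combination this, norm_one]
    nlinarith [norm_nonneg (Complex.sin (u 0))]
  rw [(huc a (hsub ma)).1]
  have : Complex.cos (u a) = - (Complex.sin (u 0) * Complex.sin (u a - u 0)) := by
    conv_lhs => rw [← add_sub_cancel (u 0) (u a), Complex.cos_add, c0]
    ring
  rw [this, norm_neg, norm_mul, c1, one_mul]
  exact h3

theorem failure_of_total_reducibility :
    ∃ f g : ℂ → ℂ, IsRDisc f ∧ IsRDisc g ∧ BezoutPair f g ∧
      (∀ x ∈ Set.Icc (-1 : ℝ) 1, g (x : ℂ) = 0 → 0 < (f (x : ℂ)).re) ∧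
      (∀ x ∈ Set.Icc (-1 : ℝ) 1, f (x : ℂ) = 0 → 0 < (g (x : ℂ)).re) ∧
      ∀ α β : ℂ → ℂ, IsRDisc α → IsRDisc β →
        (∀ z ∈ closedBall (0 : ℂ) 1, α z * f z + β z * g z = 1) →
        ¬ IsRDiscUnit α ∨ ¬ IsRDiscUnit β := by
  obtain ⟨a, ha0, ha1, hmain⟩ := aux_main
  have hac : (a : ℂ) ≠ 0 := by exact_mod_cast ha0.ne'
  have hr : ∀ f : ℂ → ℂ, Differentiable ℂ f → (∀ z, f z = conj (f (conj z))) → IsRDisc f :=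
    fun f h1 h2 => ⟨h1.continuous.continuousOn, h1.differentiableOn, fun z _ => h2 z⟩
  refine ⟨fun z => z ^ 2, fun z => (a - z) ^ 2, hr _ (by fun_prop) (by simp),
    hr _ (by fun_prop) (by simp), ?_, ?_, ?_, ?_⟩
  · have h3c : conj (3 : ℂ) = 3 := Complex.conj_ofNat 3
    refine ⟨fun z => (z + 3 * (a - z)) / a ^ 3, fun z => ((a - z) + 3 * z) / a ^ 3,
      hr _ (by fun_prop) (by simp [h3c]), hr _ (by fun_prop) (by simp [h3c]), fun z _ => ?_⟩
    simp only
    field_simp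
    ring
  · intro x _ hx
    have : (a : ℂ) = x := by simpa [sub_eq_zero] using hx
    simp only [← this]
    rw [← Complex.ofReal_pow, Complex.ofReal_re]
    positivity
  · intro x _ hx
    have : (x : ℂ) = 0 := by simpa using hx
    simp only [this, sub_zero]
    rw [← Complex.ofReal_pow, Complex.ofReal_re]
    positivity
  · intro α β hα hβ hab
    by_contra! hcon
    obtain ⟨hα', hβ'⟩ := hcon
    have hbb : ball (0 : ℂ) 1 ⊆ closedBall 0 1 := ball_subset_closedBall
    obtain ⟨A, hA, hA2⟩ := aux_sqrt α hα.2.1 (fun z hz => hα'.2 z (hbb hz))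
    obtain ⟨B, hB, hB2⟩ := aux_sqrt β hβ.2.1 (fun z hz => hβ'.2 z (hbb hz))
    obtain ⟨w, hw, hwc⟩ := aux_cos (fun z => z * A z) (fun z => (a - z) * B z)
      (differentiableOn_id.mul hA) ((by fun_prop : DifferentiableOn ℂ (fun z : ℂ => a - z) _).mul hB)
      (by
        intro z hz
        rw [← hab z (hbb hz), hA2 z hz, hB2 z hz]; ring)
    have m0 : (0 : ℂ) ∈ ball (0 : ℂ) 1 := by simp
    have ma : (a : ℂ) ∈ ball (0 : ℂ) 1 := by
      simp [abs_of_pos ha0]; linarith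
    have hpi : (Real.pi : ℂ) ≠ 0 := by exact_mod_cast Real.pi_ne_zero
    obtain ⟨k, hk⟩ := Complex.cos_eq_zero_iff.1 (by simpa using (hwc 0 m0).1.symm)
    obtain ⟨n, hn⟩ := Complex.sin_eq_zero_iff.1 (by simpa using (hwc a ma).2.symm)
    have hfin := hmain (fun z => (w z - w 0) / Real.pi) ((hw.sub_const _).div_const _) (by
      intro z hz j hj h
      rw [div_eq_iff hpi] at h
      have hz0 : Complex.cos (w z) = 0 := by
        rw [Complex.cos_eq_zero_iff]
        refine ⟨k + j, ?_⟩
        rw [hk] at h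
        push_cast
        linear_combination h
      rw [← (hwc z hz).1] at hz0
      rcases mul_eq_zero.1 hz0 with h0 | h0
      · rw [h0, sub_self, eq_comm] at h
        simp [hj] at h
      · exact hα'.2 z (hbb hz) (by rw [hA2 z hz, h0]; ring)) (by simp)
    have e : (w a - w 0) / Real.pi = (((n - k : ℤ) : ℝ) - 1/2 : ℝ) := by
      rw [hn, hk]; push_cast; field_simp; ring
    simp only [e] at hfin
    rw [Complex.norm_real, Real.norm_eq_abs, abs_lt] at hfin
    have h1 : (0 : ℝ) < ((n - k : ℤ) : ℝ) := by linarith [hfin.1]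
    have h2 : ((n - k : ℤ) : ℝ) < 1 := by linarith [hfin.2]
    have h1' : 0 < n - k := by exact_mod_cast h1
    have h2' : n - k < 1 := by exact_mod_cast h2
    omega
end

section
/- There exists a natural number n such that, with f(z) = z² and g(z) = 1 − n²z⁴, the pair (f,g) is an invertible pair in the real disc algebra A_ℝ(D), f is positive at every real zero of g, g is positive at every real zero of f, and yet there exist no units u, v of A_ℝ(D) with uf + vg = 1. -/
open Complex Metric ComplexConjugate

lemma log_ball {f : ℂ → ℂ} {c : ℂ} {r : ℝ} (hf : DifferentiableOn ℂ f (ball c r))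
    (h0 : ∀ z ∈ ball c r, f z ≠ 0) :
    ∃ g : ℂ → ℂ, DifferentiableOn ℂ g (ball c r) ∧ ∀ z ∈ ball c r, exp (g z) = f z := by
  by_cases hr : 0 < r
  swap
  · refine ⟨0, ?_, ?_⟩ <;> simp [ball_eq_empty.2 (not_lt.1 hr)]
  have hc : c ∈ ball c r := mem_ball_self hr
  have hd : DifferentiableOn ℂ (fun z => deriv f z / f z) (ball c r) :=
    (hf.deriv isOpen_ball).div hf h0
  obtain ⟨g, hg0, hg⟩ := hd.isExactOn_ball.with_val_at c (log (f c))
  have hgd : DifferentiableOn ℂ g (ball c r) :=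
    fun z hz => (hg z hz).differentiableAt.differentiableWithinAt
  refine ⟨g, hgd, ?_⟩
  have key : ∀ z ∈ ball c r, HasDerivAt (fun w => f w * exp (-g w)) 0 z := by
    intro z hz
    have h1 : HasDerivAt f (deriv f z) z :=
      (hf.differentiableAt (isOpen_ball.mem_nhds hz)).hasDerivAt
    have h2 := (hg z hz).neg.cexp
    have := h1.mul h2
    have h4 := h0 z hz
    have e : deriv f z * exp (-g z) + f z * (exp (-g z) * -(deriv f z / f z)) = 0 := by
      field_simp
      ring
    rw [← e]
    exact this
  intro z hz
  have := isOpen_ball.is_const_of_deriv_eq_zero (convex_ball c r).isPreconnected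
    (fun z hz => (key z hz).differentiableAt.differentiableWithinAt)
    (fun z hz => (key z hz).deriv) hz hc
  simp only [exp_neg, hg0, exp_log (h0 c hc)] at this
  rw [mul_inv_cancel₀ (h0 c hc)] at this
  have h3 := exp_ne_zero (g z)
  field_simp at this
  exact this.symm

lemma bloch {F : ℂ → ℂ} {c : ℂ} {R M : ℝ} (hR : 0 < R) (hM : 0 < M)
    (hF : DifferentiableOn ℂ F (ball c R))
    (hnet : ∀ w : ℂ, ∃ w', ‖w' - w‖ < M ∧ ∀ z ∈ ball c R, F z ≠ w') :
    ‖deriv F c‖ ≤ 96 * M / R := by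
  have hF' : DifferentiableOn ℂ (deriv F) (ball c R) := hF.deriv isOpen_ball
  have hsub : closedBall c (R/2) ⊆ ball c R := closedBall_subset_ball (by linarith)
  obtain ⟨z0, hz0, hmax⟩ := (isCompact_closedBall c (R/2)).exists_isMaxOn
    (f := fun z => ‖deriv F z‖ * (R/2 - dist z c)) ⟨c, by simp; linarith⟩
    ((hF'.continuousOn.mono hsub).norm.mul (by fun_prop))
  set r := R/2 - dist z0 c with hr
  set d := ‖deriv F z0‖ with hd
  have hc := hmax (mem_closedBall_self (by linarith : 0 ≤ R/2))
  simp only [dist_self, sub_zero, Set.mem_ofPred_eq, ← hr, ← hd] at hc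
  have hz0' : dist z0 c ≤ R/2 := hz0
  suffices h : d * r ≤ 48 * M by
    rw [le_div_iff₀ hR]; linarith
  by_contra! hcon
  have hr0 : 0 ≤ r := by linarith
  have hd0 : 0 ≤ d := norm_nonneg _
  have hrpos : 0 < r := by
    rcases hr0.eq_or_lt with h | h
    · rw [← h] at hcon; linarith
    · exact h
  have hdpos : 0 < d := by
    rcases hd0.eq_or_lt with h | h
    · rw [← h] at hcon; linarith
    · exact h
  have hb : ∀ z ∈ ball z0 (r/2), z ∈ ball c R ∧ ‖deriv F z‖ ≤ 2 * d := by
    intro z hz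
    have h1 : dist z z0 < r/2 := hz
    have h2 : dist z c ≤ dist z z0 + dist z0 c := dist_triangle _ _ _
    have h3 : dist z c ≤ R/2 - r/2 := by linarith
    have h4 := hmax (show z ∈ closedBall c (R/2) from by
      rw [mem_closedBall]; linarith)
    simp only [Set.mem_ofPred_eq, ← hr, ← hd] at h4
    refine ⟨by rw [mem_ball]; linarith, ?_⟩
    have h5 : ‖deriv F z‖ * (r/2) ≤ d * r :=
      le_trans (mul_le_mul_of_nonneg_left (by linarith) (norm_nonneg _)) h4
    nlinarith
  have hz0b : z0 ∈ ball z0 (r/2) := mem_ball_self (by linarith)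
  -- Schwarz for the derivative
  have hS : ∀ z ∈ ball z0 (r/2), ‖deriv F z - deriv F z0‖ ≤ 6 * d / r * dist z z0 := by
    intro z hz
    have := dist_le_div_mul_dist_of_mapsTo_ball (f := deriv F) (c := z0) (R₁ := r/2)
      (R₂ := 3 * d) (hF'.mono fun z hz => (hb z hz).1) (fun w hw => by
        rw [mem_closedBall, dist_eq_norm]
        calc _ ≤ ‖deriv F w‖ + ‖deriv F z0‖ := norm_sub_le _ _
          _ ≤ _ := by linarith [(hb w hw).2]) hz
    rw [← dist_eq_norm]
    convert this using 2
    field_simp; ring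
  have hs2 : closedBall z0 (r/12) ⊆ ball z0 (r/2) := closedBall_subset_ball (by linarith)
  have hlow : ∀ z ∈ sphere z0 (r/12), d * r / 24 ≤ ‖F z - F z0‖ := by
    intro z hz
    have hz' : dist z z0 = r/12 := hz
    have hmv := (convex_closedBall z0 (r/12)).norm_image_sub_le_of_norm_hasDerivWithin_le
      (f := fun w => F w - deriv F z0 * w) (f' := fun w => deriv F w - deriv F z0)
      (C := d/2) (x := z0) (y := z) (fun w hw => by
        have h1 := (hF.differentiableAt (isOpen_ball.mem_nhds (hb w (hs2 hw)).1)).hasDerivAt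
        have h2 := (hasDerivAt_id w).const_mul (deriv F z0)
        rw [mul_one] at h2
        exact (h1.sub h2).hasDerivWithinAt) (fun w hw => by
        refine (hS w (hs2 hw)).trans ?_
        have : dist w z0 ≤ r/12 := hw
        calc 6 * d / r * dist w z0 ≤ 6 * d / r * (r/12) := by gcongr
          _ = d/2 := by field_simp; norm_num) (mem_closedBall_self (by linarith))
          (sphere_subset_closedBall hz)
    have e : F z - deriv F z0 * z - (F z0 - deriv F z0 * z0)
      = (F z - F z0) - deriv F z0 * (z - z0) := by ring
    rw [e, ← dist_eq_norm z z0, hz'] at hmv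
    have h3 := norm_sub_norm_le (deriv F z0 * (z - z0)) (F z - F z0)
    rw [norm_sub_rev (deriv F z0 * (z - z0)), norm_mul, ← dist_eq_norm z z0, hz', ← hd] at h3
    linarith
  have hdc : DiffContOnCl ℂ F (ball z0 (r/12)) := by
    refine DifferentiableOn.diffContOnCl ?_
    exact hF.mono fun z hz => (hb z (hs2 (closure_ball_subset_closedBall hz))).1
  have him := hdc.ball_subset_image_closedBall (by linarith) hlow (by
    intro hev
    have hev' : F =ᶠ[nhds z0] fun _ => F z0 := by
      filter_upwards [hev] with z hz using not_not.1 hz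
    have := hev'.deriv_eq
    simp only [deriv_const] at this
    rw [hd, this, norm_zero] at hdpos
    exact lt_irrefl _ hdpos)
  obtain ⟨w', hw', hne⟩ := hnet (F z0)
  obtain ⟨z, hz, hzw⟩ := him (show w' ∈ ball (F z0) (d*r/24/2) by
    rw [mem_ball, dist_eq_norm]; linarith)
  exact hne z (hb z (hs2 hz)).1 hzw

lemma net (w : ℂ) : ∃ w' : ℂ, ‖w' - w‖ < 4 ∧ ∃ k : ℤ, cosh w' = 2 * k + 1 := by
  -- real step
  have step0 : ∀ x : ℝ, 0 ≤ x → ∃ t : ℝ, |t - x| ≤ 2 ∧ ∃ k : ℤ, Real.cosh t = 2 * k + 1 := by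
    intro x hx
    have h2 : (3:ℝ) ≤ Real.cosh 2 := by
      have := Real.quadratic_le_exp_of_nonneg (show (0:ℝ) ≤ 2 by norm_num)
      have e1 : (2.7:ℝ) ≤ Real.exp 1 := by linarith [Real.exp_one_gt_d9]
      have e2 : Real.exp 2 = Real.exp 1 * Real.exp 1 := by rw [← Real.exp_add]; norm_num
      rw [Real.cosh_eq]
      have := Real.exp_pos (-2)
      nlinarith
    have h1 := Real.one_le_cosh x
    have h3 : Real.cosh x + 2 ≤ Real.cosh (x+2) := by
      rw [Real.cosh_add]
      have := Real.sinh_nonneg_iff.2 hx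
      have := Real.sinh_nonneg_iff.2 (show (0:ℝ) ≤ 2 by norm_num)
      nlinarith [mul_nonneg ‹0 ≤ Real.sinh x› this]
    set k : ℤ := ⌈(Real.cosh x - 1)/2⌉ with hk
    have k1 := Int.le_ceil ((Real.cosh x - 1)/2)
    have k2 := Int.ceil_lt_add_one ((Real.cosh x - 1)/2)
    rw [← hk] at k1 k2
    obtain ⟨t, ht, hte⟩ := intermediate_value_Icc (show x ≤ x+2 by linarith)
      (Real.continuous_cosh.continuousOn) (show (2*k+1 : ℝ) ∈ Set.Icc _ _ from
        ⟨by linarith, by linarith⟩)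
    exact ⟨t, by rw [abs_le]; constructor <;> linarith [ht.1, ht.2], k, hte⟩
  have step : ∀ x : ℝ, ∃ t : ℝ, |t - x| ≤ 2 ∧ ∃ k : ℤ, Real.cosh t = 2 * k + 1 := by
    intro x
    rcases le_total 0 x with h | h
    · exact step0 x h
    · obtain ⟨t, ht, k, hk⟩ := step0 (-x) (by linarith)
      refine ⟨-t, ?_, k, by rw [Real.cosh_neg, hk]⟩
      rw [abs_sub_comm]; convert ht using 2; ring
  obtain ⟨t, ht, k, hk⟩ := step w.re
  set m : ℤ := round (w.im / Real.pi)
  have hm : |w.im / Real.pi - m| ≤ 1/2 := abs_sub_round _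
  have hpi := Real.pi_pos
  have hm' : |m * Real.pi - w.im| ≤ Real.pi/2 := by
    have : m * Real.pi - w.im = -((w.im / Real.pi - m) * Real.pi) := by field_simp; ring
    rw [this, abs_neg, abs_mul, abs_of_pos hpi]; nlinarith
  refine ⟨⟨t, m * Real.pi⟩, ?_, ?_⟩
  · refine (norm_le_abs_re_add_abs_im _).trans_lt ?_
    simp only [sub_re, sub_im]
    linarith [Real.pi_lt_four]
  · have e : (⟨t, m * Real.pi⟩ : ℂ) = t + m * Real.pi * I := by
      apply Complex.ext <;> simp
    have hs : sin (m * Real.pi) = 0 := sin_int_mul_pi m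
    have hc : cos (m * Real.pi) = 1 ∨ cos (m * Real.pi) = -1 := by
      have := sin_sq_add_cos_sq (m * Real.pi : ℂ)
      rw [hs] at this
      exact (sq_eq_sq_iff_eq_or_eq_neg.1 (by simpa using this))
    have hk' : cosh (t:ℂ) = 2 * k + 1 := by rw [← ofReal_cosh, hk]; push_cast; rfl
    rw [e, cosh_add, cosh_mul_I, sinh_mul_I, hs, hk']
    rcases hc with h | h <;> rw [h]
    · exact ⟨k, by ring⟩
    · exact ⟨-k-1, by push_cast; ring⟩

lemma winding {B w : ℝ → ℂ} {c : ℂ} {k : ℤ} (hk : 0 < k) (hB : Continuous B) (hw : Continuous w)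
    (hre : ∀ t, 0 < (w t).re) (hper : w (2 * Real.pi) = w 0) (hc : c ≠ 0)
    (hBk : B (2 * Real.pi) = B 0 + 2 * Real.pi * I * k) (h : ∀ t, exp (B t) = c * w t) : False := by
  have hk1 : (1:ℝ) ≤ k := by exact_mod_cast hk
  have hpi := Real.pi_pos
  let D : ℝ → ℂ := fun t => B t - log (w t)
  have hD : Continuous D := hB.sub (hw.clog fun t => Or.inl (hre t))
  have hexp : ∀ t, exp (D t) = c := fun t => by
    have : w t ≠ 0 := fun h0 => by have := hre t; simp [h0] at this
    rw [exp_sub, exp_log this, h t]; field_simp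
  have him : (D (2 * Real.pi)).im = (D 0).im + 2 * Real.pi * k := by
    simp only [D, hBk, hper]; simp; ring
  obtain ⟨t, -, ht⟩ := intermediate_value_Icc (show (0:ℝ) ≤ 2 * Real.pi by positivity)
    ((continuous_im.comp hD).continuousOn) (show (D 0).im + Real.pi ∈ Set.Icc _ _ from
      ⟨by simp; linarith, by simp only [Function.comp, him]; nlinarith⟩)
  obtain ⟨j, hj⟩ := exp_eq_exp_iff_exists_int.1 ((hexp t).trans (hexp 0).symm)
  simp only [Function.comp] at ht
  rw [hj] at ht
  simp at ht
  have h2 : (2 * j : ℝ) = 1 := by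
    have : Real.pi * (2 * j - 1) = 0 := by linarith
    rcases mul_eq_zero.1 this with h | h <;> linarith
  have : (2 * j : ℤ) = 1 := by exact_mod_cast h2
  omega

lemma core2 {C : ℂ → ℂ} {p : ℂ} {R : ℝ} (hR : 60000 ≤ R) (hC : DifferentiableOn ℂ C (ball p R))
    (hodd : ∀ z ∈ ball p R, ∀ k : ℤ, C z ≠ 2 * k + 1) (hp : ‖C p‖ ≤ 2) :
    ‖C (p + 2 * Real.pi * I) - C p‖ < 4 := by
  obtain ⟨g, hg, hge⟩ := log_ball (f := fun z => C z ^ 2 - 1) ((hC.pow 2).sub_const 1) (by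
    intro z hz h
    have h' : (C z - 1) * (C z + 1) = 0 := by linear_combination h
    rcases mul_eq_zero.1 h' with h | h
    · exact hodd z hz 0 (by push_cast; linear_combination h)
    · exact hodd z hz (-1) (by push_cast; linear_combination h))
  let S : ℂ → ℂ := fun z => exp (g z / 2)
  have hS : DifferentiableOn ℂ S (ball p R) := (hg.div_const 2).cexp
  have hS2 : ∀ z ∈ ball p R, S z ^ 2 = C z ^ 2 - 1 := by
    intro z hz
    rw [← hge z hz, ← exp_nat_mul]; congr 1; push_cast; ring
  obtain ⟨ψ, hψ, hψe⟩ := log_ball (f := fun z => C z + S z) (hC.add hS) (by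
    intro z hz h
    have := hS2 z hz
    have h0 : (1:ℂ) = 0 := by linear_combination (C z - S z) * h + this
    exact one_ne_zero h0)
  have hψn : ∀ z ∈ ball p R, exp (-ψ z) = C z - S z := by
    intro z hz
    have h1 := hψe z hz
    have h2 := exp_ne_zero (ψ z)
    have h3 : exp (ψ z) * exp (-ψ z) = 1 := by rw [← exp_add]; simp
    apply mul_left_cancel₀ h2
    rw [h3, h1]
    linear_combination hS2 z hz
  have hcosh : ∀ z ∈ ball p R, cosh (ψ z) = C z := by
    intro z hz
    rw [cosh, hψe z hz, hψn z hz]; ring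
  have hsinh : ∀ z ∈ ball p R, sinh (ψ z) = S z := by
    intro z hz
    rw [sinh, hψe z hz, hψn z hz]; ring
  have hsub : ∀ z ∈ ball p (R/2), ball z (R/2) ⊆ ball p R := fun z hz => by
    apply ball_subset_ball'
    have : dist z p < R/2 := hz
    linarith
  have hder : ∀ z ∈ ball p (R/2), ‖deriv ψ z‖ ≤ 96 * 4 / (R/2) := by
    intro z hz
    refine bloch (by linarith) (by norm_num) (hψ.mono (hsub z hz)) ?_
    intro w
    obtain ⟨w', h1, k, hk⟩ := net w
    refine ⟨w', h1, fun x hx he => ?_⟩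
    have := hcosh x (hsub z hz hx)
    rw [he, hk] at this
    exact hodd x (hsub z hz hx) k this.symm
  have hpi := Real.pi_lt_four
  have hpi0 := Real.pi_pos
  have hnorm : ‖(2 * Real.pi * I : ℂ)‖ = 2 * Real.pi := by
    simp [abs_of_pos hpi0]
  have hp0 : p ∈ ball p (R/2) := mem_ball_self (by linarith)
  have hp1 : p + 2 * Real.pi * I ∈ ball p (R/2) := by
    rw [mem_ball, dist_eq_norm, add_sub_cancel_left, hnorm]; linarith
  have hss : ball p (R/2) ⊆ ball p R := ball_subset_ball (by linarith)
  have hδ := (convex_ball p (R/2)).norm_image_sub_le_of_norm_deriv_le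
    (fun z hz => hψ.differentiableAt (isOpen_ball.mem_nhds (hss hz))) hder hp0 hp1
  rw [add_sub_cancel_left, hnorm] at hδ
  set δ := ψ (p + 2 * Real.pi * I) - ψ p with hδd
  have hδ2 : ‖δ‖ ≤ 1/8 := by
    refine hδ.trans ?_
    rw [div_mul_eq_mul_div, div_le_iff₀ (by linarith)]
    linarith
  have e1 := norm_exp_sub_one_le (x := δ) (by linarith)
  have e2 := norm_exp_sub_one_le (x := -δ) (by rw [norm_neg]; linarith)
  rw [norm_neg] at e2
  have c1 : ‖cosh δ - 1‖ ≤ 1/4 := by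
    have : cosh δ - 1 = ((exp δ - 1) + (exp (-δ) - 1)) / 2 := by rw [cosh]; ring
    rw [this, norm_div]
    have := norm_add_le (exp δ - 1) (exp (-δ) - 1)
    norm_num
    linarith
  have s1 : ‖sinh δ‖ ≤ 1/4 := by
    have : sinh δ = ((exp δ - 1) - (exp (-δ) - 1)) / 2 := by rw [sinh]; ring
    rw [this, norm_div]
    have := norm_sub_le (exp δ - 1) (exp (-δ) - 1)
    simp only [Complex.norm_ofNat]
    linarith
  have hSn : ‖S p‖ ≤ 3 := by
    have h1 : ‖S p‖ ^ 2 ≤ ‖C p‖ ^ 2 + 1 := by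
      rw [← norm_pow, ← norm_pow, hS2 p (hss hp0)]
      exact (norm_sub_le (C p ^ 2) 1).trans_eq (by rw [norm_one])
    nlinarith [norm_nonneg (C p), norm_nonneg (S p)]
  have hfin : C (p + 2 * Real.pi * I) - C p = C p * (cosh δ - 1) + S p * sinh δ := by
    rw [← hcosh _ (hss hp1), show ψ (p + 2 * Real.pi * I) = ψ p + δ by rw [hδd]; ring, cosh_add,
      hcosh p (hss hp0), hsinh p (hss hp0)]
    ring
  rw [hfin]
  refine (norm_add_le _ _).trans_lt ?_
  rw [norm_mul, norm_mul]
  have := mul_le_mul hp c1 (norm_nonneg _) (by norm_num)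
  have := mul_le_mul hSn s1 (norm_nonneg _) (by norm_num)
  linarith

lemma core_s6 {L R : ℝ} (hR : 60000 ≤ R) (hL : L = 4 * R) {u v : ℂ → ℂ}
    (hu : DifferentiableOn ℂ u (ball 0 1)) (hv : DifferentiableOn ℂ v (ball 0 1))
    (hu0 : ∀ z ∈ ball (0:ℂ) 1, u z ≠ 0) (hv0 : ∀ z ∈ ball (0:ℂ) 1, v z ≠ 0)
    (h : ∀ z ∈ ball (0:ℂ) 1, u z * z ^ 2 + v z * (1 - exp L ^ 2 * z ^ 4) = 1) : False := by
  obtain ⟨a, ha, hae⟩ := log_ball hu hu0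
  obtain ⟨b, hb, hbe⟩ := log_ball hv hv0
  have hball : ∀ ζ : ℂ, ζ.re < 0 → exp ζ ∈ ball (0:ℂ) 1 := fun ζ hζ => by
    rw [mem_ball_zero_iff, norm_exp]; exact (Real.exp_lt_one_iff).2 hζ
  have hmain : ∀ ζ : ℂ, ζ.re < 0 →
      exp (a (exp ζ) + 2 * ζ) + exp (b (exp ζ)) * (1 - exp (2 * L + 4 * ζ)) = 1 := by
    intro ζ hζ
    have := h _ (hball ζ hζ)
    rw [← hae _ (hball ζ hζ), ← hbe _ (hball ζ hζ)] at this
    rw [← exp_nat_mul, ← exp_nat_mul, ← exp_nat_mul] at this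
    push_cast at this
    rw [exp_add, exp_add (2 * L : ℂ)]
    exact this
  let ζ : ℝ → ℂ := fun t => -L/4 + t * I
  have hζre : ∀ t, (ζ t).re = -L/4 := fun t => by simp [ζ]
  have hζneg : ∀ t, (ζ t).re < 0 := fun t => by rw [hζre]; linarith
  have hζc : Continuous ζ := by fun_prop
  have hzc : Continuous fun t => exp (ζ t) := by fun_prop
  have hzper : exp (ζ (2 * Real.pi)) = exp (ζ 0) := by
    have : ζ (2 * Real.pi) = ζ 0 + 2 * Real.pi * I := by simp [ζ]
    rw [this, exp_periodic]
  have hac : Continuous fun t => a (exp (ζ t)) :=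
    ha.continuousOn.comp_continuous hzc fun t => hball _ (hζneg t)
  have hbc : Continuous fun t => b (exp (ζ t)) :=
    hb.continuousOn.comp_continuous hzc fun t => hball _ (hζneg t)
  let H : ℝ → ℂ := fun t => exp (a (exp (ζ t)) + 2 * ζ t)
  have hHc : Continuous H := (hac.add (continuous_const.mul hζc)).cexp
  have hH0 : ∀ t, H t ≠ 0 := fun t => exp_ne_zero _
  let Q : ℝ → ℂ := fun t => 1 - exp (-(L + 4 * t * I))
  have hQc : Continuous Q := by fun_prop
  have hQre : ∀ t, 0 < (Q t).re := fun t => by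
    have h1 : ‖exp (-(L + 4 * t * I))‖ < 1 := by
      rw [norm_exp, Real.exp_lt_one_iff]; simp; linarith
    have h2 := (re_le_norm _).trans_lt h1
    simp only [Q, sub_re, one_re]; linarith
  have hQ0 : ∀ t, Q t ≠ 0 := fun t h0 => by have := hQre t; simp [h0] at this
  have hlQc : Continuous fun t => log (Q t) := hQc.clog fun t => Or.inl (hQre t)
  have hper4 : ∀ x : ℂ, exp (x + 4 * (2 * Real.pi) * I) = exp x := fun x => by
    have := exp_periodic.int_mul 4 x
    rw [← this]; push_cast; congr 1; ring
  have hQper : Q (2 * Real.pi) = Q 0 := by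
    simp only [Q]
    rw [← hper4]; congr 2; push_cast; ring
  have hHper : H (2 * Real.pi) = H 0 := by
    simp only [H]
    rw [exp_add (a _), exp_add (a _), hzper, two_mul, exp_add (ζ _), hzper, two_mul,
      exp_add (ζ 0) (ζ 0)]
  have hHQ : ∀ t, exp (b (exp (ζ t))) * exp (4 * t * I) * Q t = -exp (-L) * (1 - H t) := by
    intro t
    have h1 := hmain (ζ t) (hζneg t)
    have h2 : (2 * L + 4 * ζ t : ℂ) = L + 4 * t * I := by simp only [ζ]; ring
    rw [h2] at h1
    have h3 : (1 - H t) = exp (b (exp (ζ t))) * (1 - exp (L + 4 * t * I)) := by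
      simp only [H]; linear_combination -h1
    rw [h3]
    simp only [Q, exp_neg, exp_add]
    have := exp_ne_zero (L:ℂ)
    have := exp_ne_zero (4 * t * I)
    field_simp
    ring
  have hex : ∃ t, ‖H t‖ = 1 := by
    by_contra! hne
    have hor : (∀ t, ‖H t‖ < 1) ∨ (∀ t, 1 < ‖H t‖) := by
      by_contra! hcon
      obtain ⟨⟨t1, h1⟩, ⟨t2, h2⟩⟩ := hcon
      obtain ⟨t, ht⟩ := mem_range_of_exists_le_of_exists_ge hHc.norm ⟨t2, h2⟩ ⟨t1, h1⟩
      exact hne t ht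
    rcases hor with hlt | hgt
    · refine winding (k := 4) (c := -exp (-L)) (w := fun t => 1 - H t)
        (B := fun t => b (exp (ζ t)) + 4 * t * I + log (Q t)) (by norm_num)
        ((hbc.add (by fun_prop)).add hlQc)
        (continuous_const.sub hHc) ?_ ?_ (neg_ne_zero.2 (exp_ne_zero _)) ?_ ?_
      · intro t
        have := (re_le_norm _).trans_lt (hlt t)
        simp only [sub_re, one_re]; linarith
      · simp only [hHper]
      · simp only [hzper, hQper]; push_cast; ring
      · intro t
        rw [exp_add, exp_add, exp_log (hQ0 t), hHQ]
    · refine winding (k := 2) (c := exp (-L)) (w := fun t => 1 - (H t)⁻¹)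
        (B := fun t => b (exp (ζ t)) + 4 * t * I + log (Q t) - (a (exp (ζ t)) + 2 * ζ t))
        (by norm_num)
        (((hbc.add (by fun_prop)).add hlQc).sub (hac.add (continuous_const.mul hζc)))
        (continuous_const.sub (hHc.inv₀ hH0)) ?_ ?_ (exp_ne_zero _) ?_ ?_
      · intro t
        have h1 : ‖(H t)⁻¹‖ < 1 := by rw [norm_inv]; exact inv_lt_one_of_one_lt₀ (hgt t)
        have := (re_le_norm _).trans_lt h1
        simp only [sub_re, one_re]; linarith
      · simp only [hHper]
      · simp only [hzper, hQper]; simp only [ζ]; push_cast; ring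
      · intro t
        rw [exp_sub, exp_add, exp_add, exp_log (hQ0 t), hHQ]
        have := hH0 t
        change _ / H t = _
        field_simp
        ring
  obtain ⟨t, ht⟩ := hex
  have hpi := Real.pi_pos
  have hpiC : (Real.pi : ℂ) ≠ 0 := ofReal_ne_zero.2 hpi.ne'
  set s := a (exp (ζ t)) + 2 * ζ t with hs
  have hsre : s.re = 0 := by
    have : ‖exp s‖ = 1 := ht
    rw [norm_exp] at this
    exact Real.exp_eq_one_iff _ |>.1 this
  set m : ℤ := round (s.im / (2 * Real.pi))
  have hm : |s.im / (2 * Real.pi) - m| ≤ 1/2 := abs_sub_round _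
  let C : ℂ → ℂ := fun z => (a (exp z) + 2 * z) / (Real.pi * I) - (2 * m + 1)
  have hreb : ∀ z ∈ ball (ζ t) R, -L/2 < z.re ∧ z.re < 0 := by
    intro z hz
    have h1 : ‖z - ζ t‖ < R := by rwa [mem_ball, dist_eq_norm] at hz
    have h2 := (abs_re_le_norm _).trans_lt h1
    rw [sub_re, hζre, abs_lt] at h2
    constructor <;> linarith [h2.1, h2.2]
  have hCd : DifferentiableOn ℂ C (ball (ζ t) R) := by
    have h1 : DifferentiableOn ℂ (fun z => a (exp z)) (ball (ζ t) R) :=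
      ha.comp differentiable_exp.differentiableOn fun z hz => hball z (hreb z hz).2
    exact ((h1.add (by fun_prop)).div_const _).sub_const _
  have hodd : ∀ z ∈ ball (ζ t) R, ∀ k : ℤ, C z ≠ 2 * k + 1 := by
    intro z hz k hk
    have h1 : a (exp z) + 2 * z = (k + m + 1 : ℤ) * (2 * Real.pi * I) := by
      simp only [C] at hk
      have hI := I_ne_zero
      rw [sub_eq_iff_eq_add, div_eq_iff (mul_ne_zero hpiC hI)] at hk
      rw [hk]; push_cast; ring
    have h2 := hmain z (hreb z hz).2
    rw [h1, exp_int_mul_two_pi_mul_I] at h2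
    have h3 : exp (b (exp z)) * (1 - exp (2 * L + 4 * z)) = 0 := by linear_combination h2
    have h4 : exp (2 * L + 4 * z) = 1 := by
      rcases mul_eq_zero.1 h3 with h | h
      · exact absurd h (exp_ne_zero _)
      · linear_combination -h
    have h5 : ‖exp (2 * L + 4 * z)‖ = 1 := by rw [h4, norm_one]
    rw [norm_exp, Real.exp_eq_one_iff] at h5
    simp at h5
    linarith [(hreb z hz).1]
  have hCp : ‖C (ζ t)‖ ≤ 2 := by
    have hsI : s = s.im * I := by apply Complex.ext <;> simp [hsre]
    have : C (ζ t) = ((2 * (s.im / (2 * Real.pi) - m) - 1 : ℝ) : ℂ) := by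
      change s / (Real.pi * I) - (2 * m + 1) = _
      rw [hsI]
      have hI := I_ne_zero
      push_cast
      simp
      field_simp
      ring
    rw [this, norm_real, Real.norm_eq_abs]
    rw [abs_le] at hm ⊢
    constructor <;> linarith [hm.1, hm.2]
  have hlt := core2 hR hCd hodd hCp
  have : C (ζ t + 2 * Real.pi * I) - C (ζ t) = 4 := by
    simp only [C]
    rw [exp_periodic]
    have hI := I_ne_zero
    field_simp
    ring
  rw [this] at hlt
  norm_num at hlt

theorem explicit_non_totally_reducible_pair :
    ∃ n : ℕ,
      BezoutPair (fun z => z ^ 2) (fun z => 1 - (n : ℂ) ^ 2 * z ^ 4) ∧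
      (∀ x ∈ Set.Icc (-1 : ℝ) 1, 1 - (n : ℂ) ^ 2 * (x : ℂ) ^ 4 = 0 → 0 < ((x : ℂ) ^ 2).re) ∧
      (∀ x ∈ Set.Icc (-1 : ℝ) 1, (x : ℂ) ^ 2 = 0 → 0 < (1 - (n : ℂ) ^ 2 * (x : ℂ) ^ 4).re) ∧
      ¬ ∃ u v : ℂ → ℂ, IsRDiscUnit u ∧ IsRDiscUnit v ∧
          ∀ z ∈ closedBall (0 : ℂ) 1, u z * z ^ 2 + v z * (1 - (n : ℂ) ^ 2 * z ^ 4) = 1 := by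
  obtain ⟨n, hn⟩ := exists_nat_ge (Real.exp 240000)
  have hn0 : (0:ℝ) < n := (Real.exp_pos _).trans_le hn
  refine ⟨n, ⟨fun z => (n:ℂ) ^ 2 * z ^ 2, fun _ => 1, ⟨by fun_prop, by fun_prop, ?_⟩,
    ⟨by fun_prop, by fun_prop, ?_⟩, ?_⟩, ?_, ?_, ?_⟩
  · intro z _; simp
  · intro z _; simp
  · intro z _; simp only []; ring
  · intro x _ hx
    have hx0 : x ≠ 0 := by rintro rfl; simp at hx
    rw [← ofReal_pow, ofReal_re]; positivity
  · intro x _ hx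
    have hx0 : (x:ℂ) = 0 := by simpa using hx
    rw [hx0]; simp
  · rintro ⟨u, v, ⟨⟨-, hu, -⟩, hu0⟩, ⟨⟨-, hv, -⟩, hv0⟩, h⟩
    have hlog : 240000 ≤ Real.log n := (Real.le_log_iff_exp_le hn0).2 hn
    have he : exp (Real.log n : ℝ) = (n : ℂ) := by
      rw [← ofReal_exp, Real.exp_log hn0]; simp
    refine core_s6 (L := Real.log n) (R := Real.log n / 4) (by linarith) (by ring) hu hv
      (fun z hz => hu0 z (ball_subset_closedBall hz))
      (fun z hz => hv0 z (ball_subset_closedBall hz)) (fun z hz => ?_)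
    rw [he]
    exact h z (ball_subset_closedBall hz)
end

section
/- Let (f,g) be an invertible pair in the real disc algebra A_ℝ(D), and suppose f(x) ≠ g(x) for every x ∈ [-1,1]. Then there exist α, β ∈ A_ℝ(D) such that αf + βg and αg + βf are both units of A_ℝ(D). -/
open Complex Metric ComplexConjugate

namespace RD

lemma add {f g : ℂ → ℂ} (hf : IsRDisc f) (hg : IsRDisc g) : IsRDisc (fun z => f z + g z) :=
  ⟨hf.1.add hg.1, hf.2.1.add hg.2.1, fun z hz => by
    rw [map_add, ← hf.2.2 z hz, ← hg.2.2 z hz]⟩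

lemma sub {f g : ℂ → ℂ} (hf : IsRDisc f) (hg : IsRDisc g) : IsRDisc (fun z => f z - g z) :=
  ⟨hf.1.sub hg.1, hf.2.1.sub hg.2.1, fun z hz => by
    rw [map_sub, ← hf.2.2 z hz, ← hg.2.2 z hz]⟩

lemma mul {f g : ℂ → ℂ} (hf : IsRDisc f) (hg : IsRDisc g) : IsRDisc (fun z => f z * g z) :=
  ⟨hf.1.mul hg.1, hf.2.1.mul hg.2.1, fun z hz => by
    rw [map_mul, ← hf.2.2 z hz, ← hg.2.2 z hz]⟩

lemma neg {f : ℂ → ℂ} (hf : IsRDisc f) : IsRDisc (fun z => - f z) :=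
  ⟨hf.1.neg, hf.2.1.neg, fun z hz => by rw [map_neg, ← hf.2.2 z hz]⟩

lemma const (c : ℝ) : IsRDisc (fun _ => (c : ℂ)) :=
  ⟨continuousOn_const, differentiableOn_const _, fun z _ => by simp⟩

lemma ident : IsRDisc (fun z => z) :=
  ⟨continuousOn_id, differentiableOn_id, fun z _ => by simp⟩

lemma inv {f : ℂ → ℂ} (hf : IsRDisc f) (h0 : ∀ z ∈ closedBall (0 : ℂ) 1, f z ≠ 0) :
    IsRDisc (fun z => (f z)⁻¹) :=
  ⟨hf.1.inv₀ h0, hf.2.1.inv (fun z hz => h0 z (ball_subset_closedBall hz)), fun z hz => by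
    rw [map_inv₀, ← hf.2.2 z hz]⟩

lemma comp {φ f : ℂ → ℂ} (hφ : Differentiable ℂ φ) (hs : ∀ x, φ (conj x) = conj (φ x))
    (hf : IsRDisc f) : IsRDisc (fun z => φ (f z)) :=
  ⟨hφ.continuous.comp_continuousOn hf.1, hφ.comp_differentiableOn hf.2.1, fun z hz => by
    rw [← hs, ← hf.2.2 z hz]⟩

lemma exp {f : ℂ → ℂ} (hf : IsRDisc f) : IsRDisc (fun z => Complex.exp (f z)) :=
  comp Complex.differentiable_exp (fun x => Complex.exp_conj x) hf

lemma log {f : ℂ → ℂ} (hf : IsRDisc f) (h0 : ∀ z ∈ closedBall (0 : ℂ) 1, 0 < (f z).re) :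
    ∃ l, IsRDisc l ∧ ∀ z ∈ closedBall (0 : ℂ) 1, Complex.exp (l z) = f z := by
  have hs : ∀ z ∈ closedBall (0 : ℂ) 1, f z ∈ slitPlane := fun z hz => Or.inl (h0 z hz)
  refine ⟨fun z => Complex.log (f z), ⟨hf.1.clog hs,
    hf.2.1.clog (fun z hz => hs z (ball_subset_closedBall hz)), fun z hz => ?_⟩, fun z hz => ?_⟩
  · have hz' : conj z ∈ closedBall (0 : ℂ) 1 := by simpa using hz
    rw [← Complex.log_conj _ (slitPlane_arg_ne_pi (hs _ hz')), ← hf.2.2 z hz]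
  · exact Complex.exp_log (slitPlane_ne_zero (hs z hz))

/-- The entire function with `exp x = 1 + x * φ x`. -/
lemma exists_phi : ∃ φ : ℂ → ℂ, Differentiable ℂ φ ∧ (∀ x, φ (conj x) = conj (φ x)) ∧
    ∀ x, Complex.exp x = 1 + x * φ x := by
  refine ⟨dslope Complex.exp 0, ?_, ?_, ?_⟩
  · have := (Complex.differentiableOn_dslope (f := Complex.exp) (s := Set.univ) (c := 0)
      Filter.univ_mem).2 Complex.differentiable_exp.differentiableOn
    exact differentiableOn_univ.1 this
  · intro x
    by_cases hx : x = 0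
    · subst hx; simp
    · have hx' : conj x ≠ 0 := by simpa using hx
      rw [dslope_of_ne _ hx, dslope_of_ne _ hx']
      simp [slope_def_field, Complex.exp_conj]
  · intro x
    have := sub_smul_dslope Complex.exp 0 x
    simp at this
    rw [this]; ring

lemma conj_mem {z : ℂ} (hz : z ∈ closedBall (0 : ℂ) 1) : conj z ∈ closedBall (0 : ℂ) 1 := by
  simpa using hz

/-- symmetrization -/
lemma symm {q : ℂ → ℂ} (hq : ∃ U, IsOpen U ∧ closedBall (0 : ℂ) 1 ⊆ U ∧ DifferentiableOn ℂ q U) :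
    IsRDisc (fun z => (q z + conj (q (conj z))) / 2) := by
  obtain ⟨U, hU, hsub, hd⟩ := hq
  have hd' : ∀ z ∈ closedBall (0 : ℂ) 1, DifferentiableAt ℂ (fun z => (q z + conj (q (conj z))) / 2) z := by
    intro z hz
    have h1 : DifferentiableAt ℂ q z := hd.differentiableAt (hU.mem_nhds (hsub hz))
    have h2 : DifferentiableAt ℂ q (conj z) :=
      hd.differentiableAt (hU.mem_nhds (hsub (conj_mem hz)))
    have h3 : DifferentiableAt ℂ (fun z => conj (q (conj z))) z := by
      have := h2.conj_conj
      simpa [Function.comp_def] using this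
    exact (h1.add h3).div_const 2
  refine ⟨fun z hz => (hd' z hz).continuousAt.continuousWithinAt,
    fun z hz => (hd' z (ball_subset_closedBall hz)).differentiableWithinAt, fun z hz => ?_⟩
  have h2 : conj (2 : ℂ) = 2 := Complex.conj_ofNat 2
  simp [add_comm, h2]

/-- `z + t` is invertible modulo `v`. -/
lemma inv_mod {v : ℂ → ℂ} (hv : IsRDisc v)
    (h0 : ∀ x ∈ Set.Icc (-1 : ℝ) 1, v (x : ℂ) ≠ 0) (t : ℝ) :
    ∃ p m : ℂ → ℂ, IsRDisc p ∧ IsRDisc m ∧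
      ∀ z ∈ closedBall (0 : ℂ) 1, (z + t) * p z = 1 + v z * m z := by
  by_cases ht : -t ∈ Set.Icc (-1 : ℝ) 1
  · -- the main case
    set a : ℂ := ((-t : ℝ) : ℂ) with ha
    have hac : conj a = a := by rw [ha, Complex.conj_ofReal]
    have haB : a ∈ closedBall (0 : ℂ) 1 := by
      rw [mem_closedBall_zero_iff, ha, Complex.norm_real, Real.norm_eq_abs]
      exact abs_le.2 ht
    have hc : 0 < ‖v a‖ := norm_pos_iff.2 (h0 _ ht)
    have huc := (isCompact_closedBall (0 : ℂ) 1).uniformContinuousOn_of_continuous hv.1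
    obtain ⟨δ, hδ, hU⟩ := Metric.uniformContinuousOn_iff.1 huc (‖v a‖ / 2) (by positivity)
    obtain ⟨r, hr0, hr1, hrδ⟩ : ∃ r : ℝ, 0 < r ∧ r < 1 ∧ 1 - r < δ := by
      refine ⟨max (1/2) (1 - δ/2), by positivity, max_lt (by norm_num) (by linarith), ?_⟩
      have := le_max_right (1/2) (1 - δ/2)
      linarith
    have hrB : ∀ z ∈ closedBall (0 : ℂ) 1, (r : ℂ) * z ∈ ball (0 : ℂ) 1 := by
      intro z hz
      rw [mem_closedBall_zero_iff] at hz
      rw [mem_ball_zero_iff, norm_mul, Complex.norm_real, Real.norm_eq_abs, abs_of_pos hr0]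
      nlinarith
    have hclose : ∀ z ∈ closedBall (0 : ℂ) 1, ‖v z - v (r * z)‖ < ‖v a‖ / 2 := by
      intro z hz
      rw [← dist_eq_norm]
      refine hU z hz _ (ball_subset_closedBall (hrB z hz)) ?_
      have : z - r * z = ((1 - r : ℝ) : ℂ) * z := by push_cast; ring
      rw [dist_eq_norm, this, norm_mul, Complex.norm_real, Real.norm_eq_abs,
        abs_of_pos (by linarith)]
      rw [mem_closedBall_zero_iff] at hz
      nlinarith
    let w : ℂ → ℂ := fun z => v (r * z)
    let U : Set ℂ := (fun z : ℂ => (r : ℂ) * z) ⁻¹' ball (0 : ℂ) 1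
    have hUo : IsOpen U := isOpen_ball.preimage (by fun_prop)
    have hUs : closedBall (0 : ℂ) 1 ⊆ U := fun z hz => hrB z hz
    have hwd : DifferentiableOn ℂ w U :=
      hv.2.1.comp (by fun_prop) (fun z hz => hz)
    have hqd : DifferentiableOn ℂ (dslope w a) U :=
      (Complex.differentiableOn_dslope (hUo.mem_nhds (hUs haB))).2 hwd
    have hq := symm ⟨U, hUo, hUs, hqd⟩
    set q : ℂ → ℂ := fun z => (dslope w a z + conj (dslope w a (conj z))) / 2 with hqdef
    have hws : ∀ z ∈ closedBall (0 : ℂ) 1, conj (w (conj z)) = w z := by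
      intro z hz
      have := hv.2.2 _ (ball_subset_closedBall (hrB z hz))
      simp only [w]
      rw [this]; simp
    have hqe : ∀ z ∈ closedBall (0 : ℂ) 1, (z + t) * q z = w z - w a := by
      intro z hz
      have h1 := sub_smul_dslope w a z
      have h2 := congrArg conj (sub_smul_dslope w a (conj z))
      have h3 := hws z hz
      have h4 := hws a haB
      simp only [smul_eq_mul, map_mul, map_sub, Complex.conj_conj, hac] at h1 h2 h4
      rw [h3, h4] at h2
      have : z + t = z - a := by rw [ha]; push_cast; ring
      rw [this, hqdef]
      linear_combination (h1 + h2) / 2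
    have hE : IsRDisc (fun z => v z - (z + t) * q z) := sub hv (mul (add ident (const t)) hq)
    have hE0 : ∀ z ∈ closedBall (0 : ℂ) 1, v z - (z + t) * q z ≠ 0 := by
      intro z hz h
      rw [hqe z hz] at h
      have h1 := hclose z hz
      have h2 := hclose a haB
      have : v a = (v a - v (r * a)) - (v z - v (r * z)) := by
        simp only [w] at h
        linear_combination h
      have h3 := norm_sub_le (v a - v (r * a)) (v z - v (r * z))
      rw [← this] at h3
      linarith
    refine ⟨fun z => - (q z * (v z - (z + t) * q z)⁻¹), fun z => - (v z - (z + t) * q z)⁻¹,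
      neg (mul hq (inv hE hE0)), neg (inv hE hE0), fun z hz => ?_⟩
    have := hE0 z hz
    field_simp
    ring
  · have hz0 : ∀ z ∈ closedBall (0 : ℂ) 1, z + (t : ℂ) ≠ 0 := by
      intro z hz h
      apply ht
      have : z = ((-t : ℝ) : ℂ) := by push_cast; linear_combination h
      rw [mem_closedBall_zero_iff, this, Complex.norm_real, Real.norm_eq_abs] at hz
      exact abs_le.1 hz
    refine ⟨fun z => (z + t)⁻¹, fun _ => ((0 : ℝ) : ℂ), inv (add ident (const t)) hz0, const 0,
      fun z hz => ?_⟩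
    rw [mul_inv_cancel₀ (hz0 z hz)]; simp

/-- `g` is an exponential modulo `v`. -/
def EM (v g : ℂ → ℂ) : Prop :=
  ∃ k m : ℂ → ℂ, IsRDisc k ∧ IsRDisc m ∧
    ∀ z ∈ closedBall (0 : ℂ) 1, g z = Complex.exp (k z) + v z * m z

lemma local_step {v : ℂ → ℂ} (hv : IsRDisc v)
    (h0 : ∀ x ∈ Set.Icc (-1 : ℝ) 1, v (x : ℂ) ≠ 0) (t : ℝ) :
    ∃ ε > 0, ∀ s : ℝ, |s - t| < ε →
      (EM v (fun z => z + (s : ℂ)) ↔ EM v (fun z => z + (t : ℂ))) := by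
  obtain ⟨p, m, hp, hm, hpm⟩ := inv_mod hv h0 t
  obtain ⟨C, hC⟩ := (isCompact_closedBall (0 : ℂ) 1).exists_bound_of_continuousOn hp.1
  have hC0 : 0 ≤ C := (norm_nonneg _).trans (hC 0 (by simp))
  refine ⟨1 / (C + 1), by positivity, fun s hs => ?_⟩
  rw [lt_div_iff₀ (by positivity)] at hs
  have hL : IsRDisc (fun z => ((1 : ℝ) : ℂ) + ((s - t : ℝ) : ℂ) * p z) :=
    add (const 1) (mul (const _) hp)
  obtain ⟨l, hl, hle⟩ := log hL (by
    intro z hz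
    have h1 : ‖((s - t : ℝ) : ℂ) * p z‖ < 1 := by
      rw [norm_mul, Complex.norm_real, Real.norm_eq_abs]
      have := hC z hz
      have h2 := abs_nonneg (s - t)
      nlinarith
    have h2 := (abs_le.1 (Complex.abs_re_le_norm (((s - t : ℝ) : ℂ) * p z))).1
    rw [add_re, ofReal_re]
    linarith)
  -- (z + s) = (z + t) * exp l - (s - t) * v * m
  have key : ∀ z ∈ closedBall (0 : ℂ) 1,
      (z + s) = (z + t) * Complex.exp (l z) - ((s - t : ℝ) : ℂ) * (v z * m z) := by
    intro z hz
    rw [hle z hz]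
    have := hpm z hz
    push_cast
    linear_combination (-(s - t) : ℂ) * this
  constructor
  · rintro ⟨k, n, hk, hn, hkn⟩
    refine ⟨fun z => k z - l z,
      fun z => (n z + ((s - t : ℝ) : ℂ) * m z) * Complex.exp (- l z), sub hk hl,
      mul (add hn (mul (const _) hm)) (exp (neg hl)), fun z hz => ?_⟩
    have h1 := key z hz
    have h2 := hkn z hz
    simp only at h2
    have h3 : Complex.exp (l z) * Complex.exp (- l z) = 1 := by rw [← Complex.exp_add]; simp
    simp only
    rw [sub_eq_add_neg, Complex.exp_add]
    linear_combination (-(z + t)) * h3 + Complex.exp (- l z) * (h2 - h1)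
  · rintro ⟨k, n, hk, hn, hkn⟩
    refine ⟨fun z => k z + l z,
      fun z => n z * Complex.exp (l z) - ((s - t : ℝ) : ℂ) * m z, add hk hl,
      sub (mul hn (exp hl)) (mul (const _) hm), fun z hz => ?_⟩
    have h1 := key z hz
    have h2 := hkn z hz
    simp only at h2
    simp only
    rw [Complex.exp_add]
    linear_combination h1 + Complex.exp (l z) * h2

lemma em_all {v : ℂ → ℂ} (hv : IsRDisc v)
    (h0 : ∀ x ∈ Set.Icc (-1 : ℝ) 1, v (x : ℂ) ≠ 0) (t : ℝ) : EM v (fun z => z + (t : ℂ)) := by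
  have hclopen : IsClopen {t : ℝ | EM v (fun z => z + (t : ℂ))} := by
    constructor
    · rw [← isOpen_compl_iff, Metric.isOpen_iff]
      intro t ht
      obtain ⟨ε, hε, h⟩ := local_step hv h0 t
      exact ⟨ε, hε, fun s hs hs' => ht ((h s (by simpa [Real.dist_eq] using hs)).1 hs')⟩
    · rw [Metric.isOpen_iff]
      intro t ht
      obtain ⟨ε, hε, h⟩ := local_step hv h0 t
      exact ⟨ε, hε, fun s hs => (h s (by simpa [Real.dist_eq] using hs)).2 ht⟩
  have hne : {t : ℝ | EM v (fun z => z + (t : ℂ))}.Nonempty := by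
    refine ⟨2, ?_⟩
    obtain ⟨l, hl, hle⟩ := log (add ident (const 2)) (by
      intro z hz
      rw [mem_closedBall_zero_iff] at hz
      have h2 := (abs_le.1 (Complex.abs_re_le_norm z)).1
      rw [add_re, ofReal_re]
      linarith)
    exact ⟨l, fun _ => ((0 : ℝ) : ℂ), hl, const 0, fun z hz => by rw [hle z hz]; simp⟩
  have := hclopen.eq_univ hne
  exact (Set.eq_univ_iff_forall.1 this) t

lemma neg_one {v : ℂ → ℂ} (hv : IsRDisc v)
    (h0 : ∀ x ∈ Set.Icc (-1 : ℝ) 1, v (x : ℂ) ≠ 0) :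
    ∃ k m : ℂ → ℂ, IsRDisc k ∧ IsRDisc m ∧
      ∀ z ∈ closedBall (0 : ℂ) 1, Complex.exp (k z) = -1 + v z * m z := by
  obtain ⟨k, m, hk, hm, hkm⟩ := em_all hv h0 (-2)
  obtain ⟨l, hl, hle⟩ := log (sub (const 2) ident) (by
      intro z hz
      rw [mem_closedBall_zero_iff] at hz
      have h2 := (abs_le.1 (Complex.abs_re_le_norm z)).2
      rw [sub_re, ofReal_re]
      linarith)
  refine ⟨fun z => k z - l z, fun z => - (m z * Complex.exp (- l z)), sub hk hl,
    neg (mul hm (exp (neg hl))), fun z hz => ?_⟩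
  have h1 := hkm z hz
  have h2 := hle z hz
  have h3 : Complex.exp (l z) * Complex.exp (- l z) = 1 := by rw [← Complex.exp_add]; simp
  simp only at h1 h2 ⊢
  push_cast at h1 h2
  rw [sub_eq_add_neg, Complex.exp_add]
  linear_combination (-1) * h3 + Complex.exp (- l z) * (h2 - h1)

end RD

theorem swap_simultaneously_stabilizable (f g : ℂ → ℂ)
    (hf : IsRDisc f) (hg : IsRDisc g) (hinv : BezoutPair f g)
    (havoid : ∀ x ∈ Set.Icc (-1 : ℝ) 1, f (x : ℂ) ≠ g (x : ℂ)) :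
    ∃ α β : ℂ → ℂ, IsRDisc α ∧ IsRDisc β ∧
      IsRDiscUnit (fun z => α z * f z + β z * g z) ∧
      IsRDiscUnit (fun z => α z * g z + β z * f z) := by
  obtain ⟨α₀, β₀, hα, hβ, hb⟩ := hinv
  have hu := RD.add hf hg
  have hv := RD.sub hf hg
  have ha := RD.mul (RD.const (1/2)) (RD.add hα hβ)
  have hb' := RD.mul (RD.const (1/2)) (RD.sub hα hβ)
  obtain ⟨k, m, hk, hm, hkm⟩ := RD.neg_one hv (fun x hx => sub_ne_zero.2 (havoid x hx))
  set u : ℂ → ℂ := fun z => f z + g z with hudef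
  set v : ℂ → ℂ := fun z => f z - g z with hvdef
  set a : ℂ → ℂ := fun z => ((1/2 : ℝ) : ℂ) * (α₀ z + β₀ z) with hadef
  set b : ℂ → ℂ := fun z => ((1/2 : ℝ) : ℂ) * (α₀ z - β₀ z) with hbdef
  have hab : ∀ z ∈ closedBall (0 : ℂ) 1, a z * u z + b z * v z = 1 := by
    intro z hz
    simp only [hadef, hbdef, hudef, hvdef]
    push_cast
    linear_combination hb z hz
  obtain ⟨φ, hφ, hφs, hφe⟩ := RD.exists_phi
  have hx := RD.mul hk (RD.mul ha hu)
  have hy := RD.neg (RD.mul hk (RD.mul hb' hv))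
  -- 1 + W = u * A, 1 - W = v * B, where W = - exp (k * (a * u))
  have hA := RD.neg (RD.mul (RD.mul hk ha) (RD.comp hφ hφs hx))
  have hEy := RD.exp hy
  have hB := RD.sub (RD.mul hm hEy) (RD.neg (RD.mul (RD.mul hk hb') (RD.comp hφ hφs hy)))
  set A : ℂ → ℂ := fun z => - (k z * a z * φ (k z * (a z * u z))) with hAdef
  set B : ℂ → ℂ := fun z => m z * Complex.exp (- (k z * (b z * v z))) -
    - (k z * b z * φ (- (k z * (b z * v z)))) with hBdef
  have h1 : ∀ z ∈ closedBall (0 : ℂ) 1, u z * A z = 1 - Complex.exp (k z * (a z * u z)) := by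
    intro z hz
    rw [hφe, hAdef]; ring
  have h2 : ∀ z ∈ closedBall (0 : ℂ) 1, v z * B z = 1 + Complex.exp (k z * (a z * u z)) := by
    intro z hz
    have e1 : k z * (a z * u z) = k z + - (k z * (b z * v z)) := by
      linear_combination k z * hab z hz
    have e2 := hφe (- (k z * (b z * v z)))
    rw [e1, Complex.exp_add, hkm z hz]
    simp only [hBdef]
    linear_combination e2
  have hα' := RD.mul (RD.const (1/2)) (RD.add hA hB)
  have hβ' := RD.mul (RD.const (1/2)) (RD.sub hA hB)
  refine ⟨_, _, hα', hβ', ⟨RD.add (RD.mul hα' hf) (RD.mul hβ' hg), fun z hz => ?_⟩,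
    ⟨RD.add (RD.mul hα' hg) (RD.mul hβ' hf), fun z hz => ?_⟩⟩
  · have e1 := h1 z hz
    have e2 := h2 z hz
    have : ((1/2 : ℝ) : ℂ) * (A z + B z) * f z + ((1/2 : ℝ) : ℂ) * (A z - B z) * g z = 1 := by
      have hu' : u z = f z + g z := rfl
      have hv' : v z = f z - g z := rfl
      have e3 : (f z + g z) * A z + (f z - g z) * B z = 2 := by
        rw [← hu', ← hv']; linear_combination e1 + e2
      push_cast
      linear_combination e3 / 2
    simp only
    rw [this]; exact one_ne_zero
  · have e1 := h1 z hz
    have e2 := h2 z hz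
    have : ((1/2 : ℝ) : ℂ) * (A z + B z) * g z + ((1/2 : ℝ) : ℂ) * (A z - B z) * f z
        = - Complex.exp (k z * (a z * u z)) := by
      have hu' : u z = f z + g z := rfl
      have hv' : v z = f z - g z := rfl
      have e3 : (f z + g z) * A z - (f z - g z) * B z
          = - 2 * Complex.exp (k z * (a z * u z)) := by
        rw [← hu', ← hv']; linear_combination e1 - e2
      push_cast
      linear_combination e3 / 2
    simp only
    rw [this]; exact neg_ne_zero.2 (Complex.exp_ne_zero _)
end
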